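/- arXiv:0710.2898 — 2 statements merged into one kernel-verified Lean document; each statement's English description precedes it below -/
import Mathlib

section
/- Let ℋ be a complex Hilbert space, let A ∈ B(ℋ) be normal, and let 1 ≤ r < k with k ≤ dim ℋ. Let 𝒮 be any subset of F_r containing the set 𝒮₀ = {2e^{iξ}‖A‖P : P ∈ P_r, ξ ∈ [0,2π)}. Then Λ_k(A) = ⋂{Λ_{k−r}(A + F) : F ∈ 𝒮}. -/
noncomputable section

open scoped InnerProductSpace
open Complex

variable {H : Type*} [NormedAddCommGroup H] [InnerProductSpace ℂ H] [CompleteSpace H]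

/-- `P` is an orthogonal projection: self-adjoint and idempotent. -/
def IsOrthProj (P : H →L[ℂ] H) : Prop :=
  IsSelfAdjoint P ∧ P ∘L P = P

/-- The rank of a bounded operator, as a cardinal. -/
def opRank (F : H →L[ℂ] H) : Cardinal :=
  Module.rank ℂ (LinearMap.range (F : H →ₗ[ℂ] H))

/-- The rank-`k` numerical range `Λ_k(A)`. -/
def rankKRange (k : ℕ) (A : H →L[ℂ] H) : Set ℂ :=
  { lam | ∃ P : H →L[ℂ] H, IsOrthProj P ∧ opRank P = k ∧ P ∘L A ∘L P = lam • P }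

/-- The classical numerical range `W(A)`. -/
def numRange (A : H →L[ℂ] H) : Set ℂ :=
  { z | ∃ x : H, ‖x‖ = 1 ∧ ⟪x, A x⟫_ℂ = z }

/-- `λ_k(T)`: the supremum over `k`-dimensional compressions of the `k`-th largest
eigenvalue of the compression (Courant–Fischer form: sup over `k`-dimensional
subspaces of the infimum of the Rayleigh quotient). -/
def lambdaSA (k : ℕ) (T : H →L[ℂ] H) : ℝ :=
  sSup { t : ℝ | ∃ V : Submodule ℂ H, Module.finrank ℂ V = k ∧
    ∀ x ∈ V, ‖x‖ = 1 → t ≤ (⟪x, T x⟫_ℂ).re }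

/-- The real part `(T + T*)/2` of an operator. -/
def reOp (T : H →L[ℂ] H) : H →L[ℂ] H :=
  (2 : ℂ)⁻¹ • (T + ContinuousLinearMap.adjoint T)

/-- The set `Ω_k(A)`. -/
def omegaK (k : ℕ) (A : H →L[ℂ] H) : Set ℂ :=
  { μ | ∀ ξ ∈ Set.Ico (0 : ℝ) (2 * Real.pi),
      (Complex.exp (ξ * Complex.I) * μ).re ≤ lambdaSA k (reOp (Complex.exp (ξ * Complex.I) • A)) }



lemma vdm_sum_zero {n : ℕ} (s : Fin (n+1) → ℝ) (hs : StrictMono s) (p : Polynomial ℝ)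
    (hp : p.degree < (n : ℕ)) :
    ∑ i, p.eval (s i) / ∏ j ∈ Finset.univ.erase i, (s i - s j) = 0 := by
  have h := Lagrange.coeff_eq_sum (s := Finset.univ) (v := s) hs.injective.injOn (P := p)
    (by
      simp only [Finset.card_univ, Fintype.card_fin]
      refine lt_trans hp ?_
      exact_mod_cast Nat.lt_succ_self n)
  have h2 : p.coeff ((Finset.univ : Finset (Fin (n+1))).card - 1) = 0 := by
    simp only [Finset.card_univ, Fintype.card_fin, Nat.add_sub_cancel]
    exact Polynomial.coeff_eq_zero_of_degree_lt hp
  rw [← h, h2]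

lemma vdm_sign {n : ℕ} (s : Fin (n+1) → ℝ) (hs : StrictMono s) (i : Fin (n+1)) :
    0 < (-1 : ℝ) ^ (n - (i : ℕ)) * ∏ j ∈ Finset.univ.erase i, (s i - s j) := by
  have h1 : (Finset.univ.erase i : Finset (Fin (n+1))) = Finset.Iio i ∪ Finset.Ioi i := by
    ext j; simp [lt_or_lt_iff_ne]
  have hd : Disjoint (Finset.Iio i) (Finset.Ioi i) := by
    rw [Finset.disjoint_left]; intro j hj hj'; simp at hj hj'; exact absurd hj (not_lt.2 hj'.le)
  rw [h1, Finset.prod_union hd]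
  have h3 : ∏ j ∈ Finset.Ioi i, (s i - s j) = (-1 : ℝ) ^ (n - (i:ℕ)) * ∏ j ∈ Finset.Ioi i, (s j - s i) := by
    have : ∀ j, s i - s j = (-1) * (s j - s i) := by intro j; ring
    simp_rw [this]
    rw [Finset.prod_mul_distrib, Finset.prod_const, Fin.card_Ioi]
    congr 2
  rw [h3]
  have h4 : 0 < ∏ j ∈ Finset.Iio i, (s i - s j) :=
    Finset.prod_pos (fun j hj => sub_pos.2 (hs (by simpa using hj)))
  have h5 : 0 < ∏ j ∈ Finset.Ioi i, (s j - s i) :=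
    Finset.prod_pos (fun j hj => sub_pos.2 (hs (by simpa using hj)))
  have h6 : ((-1 : ℝ) ^ (n - (i:ℕ))) * ((-1 : ℝ) ^ (n - (i:ℕ))) = 1 := by
    rw [← mul_pow]; simp
  calc (0:ℝ) < (∏ j ∈ Finset.Iio i, (s i - s j)) * ∏ j ∈ Finset.Ioi i, (s j - s i) := mul_pos h4 h5
    _ = _ := by linear_combination (-(∏ j ∈ Finset.Iio i, (s i - s j)) * ∏ j ∈ Finset.Ioi i, (s j - s i)) * h6

/-- alternating positive weights annihilating low-degree polynomials -/
lemma exists_weights {m : ℕ} (s : Fin (2*m+1) → ℝ) (hs : StrictMono s) :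
    ∃ w : Fin (2*m+1) → ℝ, (∀ i, 0 < w i) ∧
      ∀ e, e < 2*m → ∑ i : Fin (2*m+1), (-1 : ℝ)^(i:ℕ) * w i * s i ^ e = 0 := by
  refine ⟨fun i => ((-1 : ℝ) ^ (2*m - (i : ℕ)) * ∏ j ∈ Finset.univ.erase i, (s i - s j))⁻¹,
    fun i => inv_pos.2 (vdm_sign s hs i), ?_⟩
  intro e he
  have h := vdm_sum_zero s hs (Polynomial.X ^ e) (by
    rw [Polynomial.degree_X_pow]; exact_mod_cast he)
  rw [← h]
  refine Finset.sum_congr rfl (fun i _ => ?_)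
  have hi : (i:ℕ) ≤ 2*m := by omega
  have h7 : ((-1 : ℝ) ^ (2*m - (i : ℕ))) = (-1)^(i:ℕ) := by
    have h8 : (-1 : ℝ) ^ (2*m - (i : ℕ)) * (-1)^(i:ℕ) = 1 := by
      rw [← pow_add, Nat.sub_add_cancel hi, pow_mul]; simp
    have h9 : (-1 : ℝ)^(i:ℕ) * (-1)^(i:ℕ) = 1 := by rw [← mul_pow]; simp
    calc (-1 : ℝ) ^ (2*m - (i : ℕ)) = (-1 : ℝ) ^ (2*m - (i : ℕ)) * ((-1 : ℝ)^(i:ℕ) * (-1)^(i:ℕ)) := by rw [h9, mul_one]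
      _ = _ := by rw [← mul_assoc, h8, one_mul]
  beta_reduce
  rw [h7, mul_inv]
  have h9 : (-1 : ℝ)^(i:ℕ) ≠ 0 := pow_ne_zero _ (by norm_num)
  simp only [Polynomial.eval_pow, Polynomial.eval_X]
  field_simp

/-- There is an isotropic subspace of dimension at least `k` supported on `F`. -/
def HasIso {ι : Type*} [Fintype ι] (z : ι → ℂ) (F : Finset ι) (k : ℕ) : Prop :=
  ∃ V : Submodule ℂ (ι → ℂ), k ≤ Module.finrank ℂ V ∧ (∀ x ∈ V, ∀ i, i ∉ F → x i = 0) ∧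
    ∀ x ∈ V, ∀ y ∈ V, ∑ i, z i * (starRingEnd ℂ (x i) * y i) = 0

lemma HasIso.mono {ι : Type*} [Fintype ι] {z : ι → ℂ} {F G : Finset ι} {k l : ℕ}
    (h : HasIso z F k) (hFG : F ⊆ G) (hkl : l ≤ k) : HasIso z G l := by
  obtain ⟨V, h1, h2, h3⟩ := h
  exact ⟨V, hkl.trans h1, fun x hx i hi => h2 x hx i (fun h => hi (hFG h)), h3⟩

lemma hasIso_zero {ι : Type*} [Fintype ι] (z : ι → ℂ) (F : Finset ι) : HasIso z F 0 :=
  ⟨⊥, by simp, by simp +contextual, by simp +contextual⟩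

lemma HasIso.union {ι : Type*} [Fintype ι] [DecidableEq ι] {z : ι → ℂ} {F G : Finset ι} {k l : ℕ}
    (h : HasIso z F k) (h' : HasIso z G l) (hd : Disjoint F G) : HasIso z (F ∪ G) (k + l) := by
  obtain ⟨V, h1, h2, h3⟩ := h
  obtain ⟨W, h1', h2', h3'⟩ := h'
  have hFG : ∀ i, i ∉ F ∨ i ∉ G := by
    intro i; by_contra! hc; exact Finset.disjoint_left.1 hd hc.1 hc.2
  have hdis : V ⊓ W = ⊥ := by
    rw [eq_bot_iff]
    rintro x ⟨hx, hx'⟩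
    rw [Submodule.mem_bot]
    ext i
    rcases hFG i with hi | hi
    · exact h2 x hx i hi
    · exact h2' x hx' i hi
  refine ⟨V ⊔ W, ?_, ?_, ?_⟩
  · have := Submodule.finrank_sup_add_finrank_inf_eq V W
    rw [hdis, finrank_bot] at this
    omega
  · intro x hx i hi
    obtain ⟨a, ha, b, hb, rfl⟩ := Submodule.mem_sup.1 hx
    simp only [Finset.mem_union, not_or] at hi
    simp [h2 a ha i hi.1, h2' b hb i hi.2]
  · intro x hx y hy
    obtain ⟨a, ha, b, hb, rfl⟩ := Submodule.mem_sup.1 hx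
    obtain ⟨c, hc, d, hd, rfl⟩ := Submodule.mem_sup.1 hy
    have e1 := h3 a ha c hc
    have e2 := h3' b hb d hd
    calc _ = ∑ i, z i * (starRingEnd ℂ (a i) * c i) + ∑ i, z i * (starRingEnd ℂ (b i) * d i) := by
            rw [← Finset.sum_add_distrib]
            refine Finset.sum_congr rfl (fun i _ => ?_)
            rcases hFG i with hi | hi
            · simp [h2 a ha i hi, h2 c hc i hi]
            · simp [h2' b hb i hi, h2' d hd i hi]
      _ = 0 := by rw [e1, e2, add_zero]

lemma HasIso.biUnion {ι : Type*} [Fintype ι] [DecidableEq ι] {z : ι → ℂ} {κ : Type*}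
    [DecidableEq κ] (T : Finset κ)
    (F : κ → Finset ι) (k : κ → ℕ) (h : ∀ c ∈ T, HasIso z (F c) (k c))
    (hd : ∀ c ∈ T, ∀ d ∈ T, c ≠ d → Disjoint (F c) (F d)) :
    HasIso z (T.biUnion F) (∑ c ∈ T, k c) := by
  induction T using Finset.induction_on with
  | empty => simpa using hasIso_zero z _
  | insert a T ha ih =>
    rw [Finset.sum_insert ha, Finset.biUnion_insert]
    refine (h a (by simp)).union (ih (fun c hc => h c (by simp [hc]))
      (fun c hc d hd' => hd c (by simp [hc]) d (by simp [hd']))) ?_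
    rw [Finset.disjoint_biUnion_right]
    intro c hc
    exact hd a (by simp) c (by simp [hc]) (by rintro rfl; exact ha hc)

/-- the zero part -/
lemma hasIso_zeros {ι : Type*} [Fintype ι] [DecidableEq ι] (z : ι → ℂ) (F : Finset ι)
    (hF : ∀ i ∈ F, z i = 0) : HasIso z F F.card := by
  let f : (F → ℂ) →ₗ[ℂ] (ι → ℂ) :=
    { toFun := fun g i => if h : i ∈ F then g ⟨i, h⟩ else 0
      map_add' := by intro a b; ext i; by_cases h : i ∈ F <;> simp [h]
      map_smul' := by intro a b; ext i; by_cases h : i ∈ F <;> simp [h] }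
  have hf : Function.Injective f := by
    intro a b hab
    ext ⟨i, hi⟩
    have := congrFun hab i
    simpa [f, hi] using this
  refine ⟨LinearMap.range f, ?_, ?_, ?_⟩
  · rw [LinearMap.finrank_range_of_inj hf]; simp
  · rintro _ ⟨g, rfl⟩ i hi
    simp [f, hi]
  · rintro _ ⟨g, rfl⟩ _ ⟨g', rfl⟩
    refine Finset.sum_eq_zero (fun i _ => ?_)
    by_cases hi : i ∈ F
    · simp [hF i hi]
    · simp [f, hi]

/-- antipodal pair -/
lemma hasIso_pair {ι : Type*} [Fintype ι] [DecidableEq ι] (z : ι → ℂ) (i j : ι) (hij : i ≠ j)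
    (c d : ℝ) (hc : 0 < c) (hd : 0 < d) (v : ℂ) (hi : z i = c * v) (hj : z j = - (d * v)) :
    HasIso z {i, j} 1 := by
  let x : ι → ℂ := Pi.single i ((Real.sqrt d : ℝ) : ℂ) + Pi.single j ((Real.sqrt c : ℝ) : ℂ)
  have hx0 : x ≠ 0 := by
    intro h
    have := congrFun h i
    simp [x, hij] at this
    exact absurd this (Real.sqrt_pos.2 hd).ne'
  refine ⟨Submodule.span ℂ {x}, ?_, ?_, ?_⟩
  · rw [finrank_span_singleton hx0]
  · intro y hy l hl
    obtain ⟨a, rfl⟩ := Submodule.mem_span_singleton.1 hy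
    simp only [Finset.mem_insert, Finset.mem_singleton, not_or] at hl
    simp [x, hl.1, hl.2]
  · intro y hy y' hy'
    obtain ⟨a, rfl⟩ := Submodule.mem_span_singleton.1 hy
    obtain ⟨b, rfl⟩ := Submodule.mem_span_singleton.1 hy'
    have h0 : ∑ l, z l * (starRingEnd ℂ (x l) * x l) = 0 := by
      rw [← Finset.sum_subset (Finset.subset_univ {i, j})]
      · rw [Finset.sum_pair hij, hi, hj]
        have e1 : ((Real.sqrt d : ℝ) : ℂ) * (Real.sqrt d : ℝ) = d := by
          rw [← Complex.ofReal_mul, Real.mul_self_sqrt hd.le]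
        have e2 : ((Real.sqrt c : ℝ) : ℂ) * (Real.sqrt c : ℝ) = c := by
          rw [← Complex.ofReal_mul, Real.mul_self_sqrt hc.le]
        simp only [x, Pi.add_apply, Pi.single_eq_same, Pi.single_eq_of_ne hij, Pi.single_eq_of_ne hij.symm, add_zero, zero_add, Complex.conj_ofReal, e1, e2]
        ring
      · intro l _ hl
        simp only [Finset.mem_insert, Finset.mem_singleton, not_or] at hl
        simp [x, hl.1, hl.2]
    calc _ = starRingEnd ℂ a * b * ∑ l, z l * (starRingEnd ℂ (x l) * x l) := by
          rw [Finset.mul_sum]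
          refine Finset.sum_congr rfl (fun l _ => ?_)
          simp; ring
      _ = 0 := by rw [h0, mul_zero]


lemma hasIso_string {ι : Type*} [Fintype ι] [DecidableEq ι] (z : ι → ℂ) {m : ℕ}
    (φ : Fin (2*m+1) → ι) (hφ : Function.Injective φ) (η : ℂ) (c s : Fin (2*m+1) → ℝ)
    (hc : ∀ i, 0 < c i) (hs : StrictMono s)
    (hz : ∀ i : Fin (2*m+1), z (φ i) = η * ((-1)^(i:ℕ) * (c i * (1 + s i * I)))) :
    HasIso z (Finset.univ.image φ) m := by
  obtain ⟨w, hw, hsum⟩ := exists_weights s hs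
  let f : (Fin m → ℂ) →ₗ[ℂ] (ι → ℂ) :=
    { toFun := fun g => ∑ i : Fin (2*m+1), Pi.single (φ i)
        (((Real.sqrt (w i / c i) : ℝ) : ℂ) * ∑ a : Fin m, (s i : ℂ) ^ (a:ℕ) * g a)
      map_add' := by
        intro g h
        rw [← Finset.sum_add_distrib]
        refine Finset.sum_congr rfl (fun i _ => ?_)
        rw [← Pi.single_add, ← mul_add, ← Finset.sum_add_distrib]
        simp [mul_add]
      map_smul' := by
        intro r g
        rw [RingHom.id_apply, Finset.smul_sum]
        refine Finset.sum_congr rfl (fun i _ => ?_)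
        have e : ∑ a : Fin m, (s i : ℂ) ^ (a:ℕ) * (r • g) a = r * ∑ a : Fin m, (s i : ℂ) ^ (a:ℕ) * g a := by
          rw [Finset.mul_sum]
          refine Finset.sum_congr rfl (fun a _ => ?_)
          simp only [Pi.smul_apply, smul_eq_mul]; ring
        rw [e, ← Pi.single_smul, smul_eq_mul, mul_left_comm] }
  have hf1 : ∀ g j, f g (φ j) = ((Real.sqrt (w j / c j) : ℝ) : ℂ) * ∑ a : Fin m, (s j : ℂ) ^ (a:ℕ) * g a := by
    intro g j
    simp only [f, LinearMap.coe_mk, AddHom.coe_mk, Finset.sum_apply]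
    rw [Finset.sum_eq_single j]
    · simp
    · intro b _ hb
      rw [Pi.single_eq_of_ne]
      exact fun h => hb (hφ h.symm)
    · simp
  have hf2 : ∀ g l, l ∉ Finset.univ.image φ → f g l = 0 := by
    intro g l hl
    simp only [f, LinearMap.coe_mk, AddHom.coe_mk, Finset.sum_apply]
    refine Finset.sum_eq_zero (fun i _ => ?_)
    rw [Pi.single_eq_of_ne]
    rintro rfl
    simp at hl
  have hq : ∀ i, 0 < Real.sqrt (w i / c i) := fun i => Real.sqrt_pos.2 (div_pos (hw i) (hc i))
  refine ⟨LinearMap.range f, ?_, ?_, ?_⟩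
  · have hinj : Function.Injective f := by
      rw [← LinearMap.ker_eq_bot, LinearMap.ker_eq_bot']
      intro g hg
      let ψ : Fin m → ℂ := fun i => (s (Fin.castLE (by omega) i) : ℂ)
      have hψ : Function.Injective ψ := by
        intro i j hij
        have h1 := hs.injective (Complex.ofReal_injective hij)
        exact Fin.castLE_injective _ h1
      refine Matrix.eq_zero_of_forall_index_sum_pow_mul_eq_zero hψ (fun j => ?_)
      have h2 := hf1 g (Fin.castLE (by omega) j)
      rw [hg] at h2
      have h3 := mul_eq_zero.1 h2.symm
      rcases h3 with h3 | h3
      · exact absurd (Complex.ofReal_eq_zero.1 h3) (hq _).ne'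
      · exact h3
    rw [LinearMap.finrank_range_of_inj hinj]; simp
  · rintro _ ⟨g, rfl⟩ i hi
    exact hf2 g i hi
  · rintro _ ⟨g, rfl⟩ _ ⟨h, rfl⟩
    rw [← Finset.sum_subset (Finset.subset_univ (Finset.univ.image φ))
      (fun l _ hl => by rw [hf2 g l hl]; simp), Finset.sum_image (fun _ _ _ _ h => hφ h)]
    have hC : ∀ e, e < 2*m → ∑ i : Fin (2*m+1), (-1 : ℂ)^(i:ℕ) * w i * (s i : ℂ) ^ e = 0 := by
      intro e he
      have := congrArg (fun t : ℝ => (t : ℂ)) (hsum e he)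
      push_cast at this
      exact this
    have hterm : ∀ i : Fin (2*m+1), z (φ i) * (starRingEnd ℂ (f g (φ i)) * f h (φ i)) =
        ∑ a : Fin m, ∑ b : Fin m, (η * starRingEnd ℂ (g a) * h b) *
          ((-1 : ℂ)^(i:ℕ) * w i * (s i : ℂ) ^ ((a:ℕ) + b) + I * ((-1 : ℂ)^(i:ℕ) * w i * (s i : ℂ) ^ ((a:ℕ) + b + 1))) := by
      intro i
      rw [hf1, hf1, hz]
      have e1 : ((Real.sqrt (w i / c i) : ℝ) : ℂ) * ((Real.sqrt (w i / c i) : ℝ) : ℂ) * c i = w i := by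
        rw [← Complex.ofReal_mul, Real.mul_self_sqrt (div_pos (hw i) (hc i)).le, ← Complex.ofReal_mul,
          div_mul_cancel₀ _ (hc i).ne']
      rw [map_mul (starRingEnd ℂ), map_sum (starRingEnd ℂ), Complex.conj_ofReal]
      simp only [map_mul, map_pow, Complex.conj_ofReal]
      rw [← e1]
      calc _ = η * (-1)^(i:ℕ) * c i * (1 + s i * I) * ((Real.sqrt (w i / c i) : ℝ) : ℂ) * ((Real.sqrt (w i / c i) : ℝ) : ℂ) * ((∑ a : Fin m, (s i : ℂ) ^ (a:ℕ) * starRingEnd ℂ (g a)) * ∑ a : Fin m, (s i : ℂ) ^ (a:ℕ) * h a) := by ring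
        _ = _ := by
          rw [Finset.sum_mul_sum, Finset.mul_sum]
          refine Finset.sum_congr rfl (fun a _ => ?_)
          rw [Finset.mul_sum]
          refine Finset.sum_congr rfl (fun b _ => ?_)
          ring
    rw [Finset.sum_congr rfl (fun i _ => hterm i), Finset.sum_comm]
    refine Finset.sum_eq_zero (fun a _ => ?_)
    rw [Finset.sum_comm]
    refine Finset.sum_eq_zero (fun b _ => ?_)
    rw [← Finset.mul_sum, Finset.sum_add_distrib, ← Finset.mul_sum, hC _ (by omega), hC _ (by omega)]
    simp

lemma sort_finset {ι : Type*} [DecidableEq ι] (F : Finset ι) (hF : F.Nonempty) (s : ι → ℝ) :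
    ∃ a : ℕ → ι, (∀ i < F.card, a i ∈ F) ∧ (∀ i < F.card, ∀ j < F.card, a i = a j → i = j) ∧
      (∀ i < F.card, ∀ t, t < s (a i) → (F.filter (fun l => s l ≤ t)).card ≤ i) ∧
      (∀ i < F.card, ∀ t, s (a i) < t → (F.filter (fun l => t ≤ s l)).card + i + 1 ≤ F.card) ∧
      (∀ i < F.card, i + 1 ≤ (F.filter (fun l => s l ≤ s (a i))).card) ∧
      (∀ i < F.card, F.card ≤ (F.filter (fun l => s (a i) ≤ s l)).card + i) := by
  classical
  obtain ⟨x0, hx0⟩ := hF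
  let e := F.equivFin.symm
  let g : Fin F.card → ℝ := fun i => s (e i)
  let σ := Tuple.sort g
  have hmono : Monotone (g ∘ σ) := Tuple.monotone_sort g
  let a : ℕ → ι := fun i => if h : i < F.card then (e (σ ⟨i, h⟩) : ι) else x0
  have ha : ∀ i (h : i < F.card), a i = (e (σ ⟨i, h⟩) : ι) := fun i h => by simp [a, h]
  have ha1 : ∀ i < F.card, a i ∈ F := by
    intro i hi; rw [ha i hi]; exact (e _).2
  have ha2 : ∀ i < F.card, ∀ j < F.card, a i = a j → i = j := by
    intro i hi j hj h
    rw [ha i hi, ha j hj] at h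
    have := σ.injective (e.injective (Subtype.ext h))
    simpa using this
  have ha3 : ∀ l ∈ F, ∃ i < F.card, a i = l := by
    intro l hl
    refine ⟨σ.symm (e.symm ⟨l, hl⟩), Fin.is_lt _, ?_⟩
    rw [ha _ (Fin.is_lt _)]
    simp
  have ha4 : ∀ i j, i ≤ j → j < F.card → s (a i) ≤ s (a j) := by
    intro i j hij hj
    rw [ha i (by omega), ha j hj]
    exact hmono (a := ⟨i, by omega⟩) (b := ⟨j, hj⟩) hij
  refine ⟨a, ha1, ha2, ?_, ?_, ?_, ?_⟩
  · intro i hi t ht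
    have : F.filter (fun l => s l ≤ t) ⊆ (Finset.range i).image a := by
      intro l hl
      rw [Finset.mem_filter] at hl
      obtain ⟨j, hj, rfl⟩ := ha3 l hl.1
      refine Finset.mem_image.2 ⟨j, Finset.mem_range.2 ?_, rfl⟩
      by_contra! hc
      linarith [ha4 i j hc hj]
    exact (Finset.card_le_card this).trans (Finset.card_image_le.trans (by simp))
  · intro i hi t ht
    have : F.filter (fun l => t ≤ s l) ⊆ (Finset.Ico (i+1) F.card).image a := by
      intro l hl
      rw [Finset.mem_filter] at hl
      obtain ⟨j, hj, rfl⟩ := ha3 l hl.1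
      refine Finset.mem_image.2 ⟨j, Finset.mem_Ico.2 ⟨?_, hj⟩, rfl⟩
      by_contra! hc
      linarith [ha4 j i (by omega) hi]
    have h2 := (Finset.card_le_card this).trans Finset.card_image_le
    rw [Nat.card_Ico] at h2
    omega
  · intro i hi
    have : (Finset.range (i+1)).image a ⊆ F.filter (fun l => s l ≤ s (a i)) := by
      intro l hl
      obtain ⟨j, hj, rfl⟩ := Finset.mem_image.1 hl
      rw [Finset.mem_range] at hj
      exact Finset.mem_filter.2 ⟨ha1 j (by omega), ha4 j i (by omega) hi⟩
    have h2 := Finset.card_le_card this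
    rw [Finset.card_image_of_injOn, Finset.card_range] at h2
    · exact h2
    · intro j hj j' hj' h
      simp at hj hj'
      exact ha2 j (by omega) j' (by omega) h
  · intro i hi
    have : (Finset.Ico i F.card).image a ⊆ F.filter (fun l => s (a i) ≤ s l) := by
      intro l hl
      obtain ⟨j, hj, rfl⟩ := Finset.mem_image.1 hl
      rw [Finset.mem_Ico] at hj
      exact Finset.mem_filter.2 ⟨ha1 j (by omega), ha4 i j (by omega) hj.2⟩
    have h2 := Finset.card_le_card this
    rw [Finset.card_image_of_injOn, Nat.card_Ico] at h2
    · omega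
    · intro j hj j' hj' h
      simp at hj hj'
      exact ha2 j (by omega) j' (by omega) h

lemma comb_strict {ι : Type*} [Fintype ι] [DecidableEq ι] (z : ι → ℂ) (c s : ι → ℝ)
    (Pl Mi : Finset ι) (hdis : Disjoint Pl Mi) (hc : ∀ i, i ∈ Pl ∪ Mi → 0 < c i)
    (hPl : ∀ i ∈ Pl, z i = c i * (1 + s i * I)) (hMi : ∀ i ∈ Mi, z i = -(c i * (1 + s i * I)))
    (h1 : ∀ t, (Pl.filter (fun l => s l ≤ t)).card ≤ (Mi.filter (fun l => s l ≤ t)).card)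
    (h2 : ∀ t, (Pl.filter (fun l => t ≤ s l)).card ≤ (Mi.filter (fun l => t ≤ s l)).card)
    (hne : ∀ i ∈ Pl, ∀ j ∈ Mi, s i ≠ s j) : HasIso z (Pl ∪ Mi) Pl.card := by
  classical
  rcases Pl.eq_empty_or_nonempty with hP0 | hP0
  · subst hP0; simpa using hasIso_zero z _
  obtain ⟨b, hb1, hb2, hb3, hb4, hb5, hb6⟩ := sort_finset Pl hP0 s
  have hM0 : Mi.Nonempty := by
    rw [Finset.nonempty_iff_ne_empty]
    rintro rfl
    have hp : 0 < Pl.card := hP0.card_pos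
    have := (hb5 0 hp).trans (h1 _)
    simp at this
  obtain ⟨a, ha1, ha2, ha3, ha4, ha5, ha6⟩ := sort_finset Mi hM0 s
  set p := Pl.card with hp
  set q := Mi.card with hq
  have hp0 : 0 < p := hP0.card_pos
  have hpq0 : p ≤ q := by
    have e := (hb6 0 hp0).trans (Nat.add_le_add_right (h2 _) 0)
    exact e.trans (Finset.card_filter_le _ _)
  have hab : ∀ i < p, s (a i) < s (b i) := by
    intro i hi
    refine lt_of_le_of_ne ?_ (fun h => hne _ (hb1 i hi) _ (ha1 i (by omega)) h.symm)
    by_contra! hlt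
    have e1 := ha3 i (by omega) _ hlt
    have e2 := (hb5 i hi).trans (h1 _)
    omega
  have hba : ∀ i < p, s (b i) < s (a (i + (q - p))) := by
    intro i hi
    refine lt_of_le_of_ne ?_ (fun h => hne _ (hb1 i hi) _ (ha1 _ (by omega)) h)
    by_contra! hlt
    have e1 := ha4 (i + (q-p)) (by omega) _ hlt
    have e2 := (hb6 i hi)
    have e3 := h2 (s (b i))
    omega
  have hpq : p < q := by
    by_contra! hle
    have h0 : q - p = 0 := by omega
    have e1 := hab 0 hp0
    have e2 := hba 0 hp0
    rw [h0] at e2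
    exact lt_asymm e1 e2
  obtain ⟨r, hr⟩ : ∃ r, r = q - p := ⟨_, rfl⟩
  have hr0 : 0 < r := by omega
  rw [← hr] at hba
  let m : ℕ → ℕ := fun c => (p + r - 1 - c) / r
  have hm : ∀ d < r, ∀ t, t < m d ↔ d + r * t < p := by
    intro d hd t
    show t < (p + r - 1 - d) / r ↔ _
    rw [Nat.lt_iff_add_one_le, Nat.le_div_iff_mul_le hr0]
    have : (t+1) * r = r * t + r := by ring
    rw [this]
    omega
  have ham : ∀ d < r, ∀ t, t ≤ m d → d + r * t < q := by
    intro d hd t ht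
    rcases t with _ | t
    · simp; omega
    · have e1 := (hm d hd t).1 (by omega)
      have : r * (t+1) = r * t + r := by ring
      rw [this]; omega
  let φ : ∀ d, Fin (2 * m d + 1) → ι := fun d i =>
    if (i:ℕ) % 2 = 0 then a (d + r * ((i:ℕ)/2)) else b (d + r * ((i:ℕ)/2))
  have hφmem : ∀ d < r, ∀ i, φ d i ∈ Pl ∪ Mi := by
    intro d hd i
    have hi := i.2
    by_cases h : (i:ℕ) % 2 = 0
    · simp only [φ, h, if_true]
      exact Finset.mem_union_right _ (ha1 _ (ham d hd _ (by omega)))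
    · simp only [φ, h, if_false]
      exact Finset.mem_union_left _ (hb1 _ ((hm d hd _).1 (by omega)))
  have hφs : ∀ d < r, StrictMono (s ∘ φ d) := by
    intro d hd
    rw [Fin.strictMono_iff_lt_succ]
    intro i
    have hi := i.2
    by_cases h : (i:ℕ) % 2 = 0
    · have h' : ¬ ((i:ℕ)+1) % 2 = 0 := by omega
      have h'' : ((i:ℕ)+1)/2 = (i:ℕ)/2 := by omega
      simp only [φ, Function.comp, Fin.val_castSucc, Fin.val_succ, h, h', h'', if_true, if_false]
      exact hab _ ((hm d hd _).1 (by omega))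
    · have h' : ((i:ℕ)+1) % 2 = 0 := by omega
      have h'' : ((i:ℕ)+1)/2 = (i:ℕ)/2 + 1 := by omega
      simp only [φ, Function.comp, Fin.val_castSucc, Fin.val_succ, h, h', h'', if_true, if_false]
      have e := hba _ ((hm d hd ((i:ℕ)/2)).1 (by omega))
      have e2 : d + r * ((i:ℕ)/2 + 1) = d + r * ((i:ℕ)/2) + r := by ring
      rw [e2]; exact e
  have key := HasIso.biUnion (z := z) (Finset.range r) (fun d => Finset.univ.image (φ d)) m ?_ ?_
  · refine key.mono ?_ ?_
    · intro l hl
      simp only [Finset.mem_biUnion, Finset.mem_range, Finset.mem_image] at hl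
      obtain ⟨d, hd, i, _, rfl⟩ := hl
      exact hφmem d hd i
    · have e := Finset.card_eq_sum_card_fiberwise (f := fun j => j % r) (s := Finset.range p)
        (t := Finset.range r) (by intro j _; simpa using Nat.mod_lt j hr0)
      rw [Finset.card_range] at e
      rw [e]
      refine Finset.sum_le_sum (fun d hd => ?_)
      rw [Finset.mem_range] at hd
      have : m d = (Finset.range (m d)).card := by simp
      rw [this]
      refine Finset.card_le_card_of_injOn (fun j => j / r) ?_ ?_
      · intro j hj
        simp only [Finset.coe_filter, Finset.mem_range, Set.mem_ofPred_eq] at hj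
        simp only [Finset.coe_range, Set.mem_Iio]
        rw [hm d hd, ← hj.2, Nat.mod_add_div]
        exact hj.1
      · intro j hj j' hj' h
        simp only [Finset.coe_filter, Finset.mem_range, Set.mem_ofPred_eq] at hj hj'
        rw [← Nat.mod_add_div j r, ← Nat.mod_add_div j' r, hj.2, hj'.2]
        simp only at h
        rw [h]
  · intro d hd
    rw [Finset.mem_range] at hd
    refine hasIso_string z (φ d) (hφs d hd).injective.of_comp (-1) (c ∘ φ d) (s ∘ φ d)
      (fun i => hc _ (hφmem d hd i)) (hφs d hd) ?_
    intro i
    have hi := i.2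
    by_cases h : (i:ℕ) % 2 = 0
    · have hev : ((-1 : ℂ))^(i:ℕ) = 1 := Even.neg_one_pow (Nat.even_iff.2 h)
      rw [hev, hMi]
      · simp
      · simp only [φ, h, if_true]
        exact ha1 _ (ham d hd _ (by omega))
    · have hev : ((-1 : ℂ))^(i:ℕ) = -1 := Odd.neg_one_pow (Nat.odd_iff.2 (by omega))
      rw [hev, hPl]
      · simp
      · simp only [φ, h, if_false]
        exact hb1 _ ((hm d hd _).1 (by omega))
  · intro d hd d' hd' hdd
    rw [Finset.mem_range] at hd hd'
    rw [Finset.disjoint_left]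
    intro l hl hl'
    obtain ⟨i, _, rfl⟩ := Finset.mem_image.1 hl
    obtain ⟨i', _, h⟩ := Finset.mem_image.1 hl'
    have hi := i.2
    have hi' := i'.2
    have hmod : ∀ u v, d + r * u = d' + r * v → False := by
      intro u v huv
      have := congrArg (· % r) huv
      simp [Nat.add_mul_mod_self_left, Nat.mod_eq_of_lt hd, Nat.mod_eq_of_lt hd'] at this
      exact hdd this
    by_cases h0 : (i:ℕ) % 2 = 0 <;> by_cases h0' : (i':ℕ) % 2 = 0
    · simp only [φ, h0, h0', if_true] at h
      exact hmod _ _ (ha2 _ (ham d' hd' _ (by omega)) _ (ham d hd _ (by omega)) h).symm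
    · simp only [φ, h0, h0', if_true, if_false] at h
      exact Finset.disjoint_left.1 hdis (hb1 _ ((hm d' hd' _).1 (by omega)))
        (h ▸ ha1 _ (ham d hd _ (by omega)))
    · simp only [φ, h0, h0', if_true, if_false] at h
      exact Finset.disjoint_left.1 hdis (hb1 _ ((hm d hd _).1 (by omega)))
        (h ▸ ha1 _ (ham d' hd' _ (by omega)))
    · simp only [φ, h0, h0', if_false] at h
      exact hmod _ _ (hb2 _ ((hm d' hd' _).1 (by omega)) _ ((hm d hd _).1 (by omega)) h).symm


lemma card_filter_erase {ι : Type*} [DecidableEq ι] (F : Finset ι) (i : ι) (hi : i ∈ F)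
    (q : ι → Prop) [DecidablePred q] :
    (F.filter q).card = ((F.erase i).filter q).card + (if q i then 1 else 0) := by
  conv_lhs => rw [← Finset.insert_erase hi]
  rw [Finset.filter_insert]
  split_ifs with h
  · rw [Finset.card_insert_of_notMem (by simp)]
  · simp

lemma comb_weak {ι : Type*} [Fintype ι] [DecidableEq ι] (z : ι → ℂ) (c s : ι → ℝ) (n : ℕ) :
    ∀ (Pl Mi : Finset ι), Pl.card = n → Disjoint Pl Mi → (∀ i, i ∈ Pl ∪ Mi → 0 < c i) →
    (∀ i ∈ Pl, z i = c i * (1 + s i * I)) → (∀ i ∈ Mi, z i = -(c i * (1 + s i * I))) →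
    (∀ t, (Pl.filter (fun l => s l ≤ t)).card ≤ (Mi.filter (fun l => s l ≤ t)).card) →
    (∀ t, (Pl.filter (fun l => t ≤ s l)).card ≤ (Mi.filter (fun l => t ≤ s l)).card) →
    HasIso z (Pl ∪ Mi) n := by
  induction n with
  | zero => intros; exact hasIso_zero _ _
  | succ n ih =>
    intro Pl Mi hcard hdis hc hPl hMi h1 h2
    by_cases hne : ∀ i ∈ Pl, ∀ j ∈ Mi, s i ≠ s j
    · rw [← hcard]
      exact comb_strict z c s Pl Mi hdis hc hPl hMi h1 h2 hne
    · push Not at hne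
      obtain ⟨i, hi, j, hj, hij⟩ := hne
      have hsub : Pl.erase i ∪ Mi.erase j ⊆ Pl ∪ Mi :=
        Finset.union_subset_union (Finset.erase_subset _ _) (Finset.erase_subset _ _)
      have e := ih (Pl.erase i) (Mi.erase j) (by rw [Finset.card_erase_of_mem hi, hcard]; simp)
        (hdis.mono (Finset.erase_subset _ _) (Finset.erase_subset _ _))
        (fun l hl => hc l (hsub hl))
        (fun l hl => hPl l (Finset.mem_of_mem_erase hl))
        (fun l hl => hMi l (Finset.mem_of_mem_erase hl))
        (fun t => by
          have a1 := card_filter_erase Pl i hi (fun l => s l ≤ t)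
          have a2 := card_filter_erase Mi j hj (fun l => s l ≤ t)
          have a3 := h1 t
          rw [a1, a2, hij] at a3
          omega)
        (fun t => by
          have a1 := card_filter_erase Pl i hi (fun l => t ≤ s l)
          have a2 := card_filter_erase Mi j hj (fun l => t ≤ s l)
          have a3 := h2 t
          rw [a1, a2, hij] at a3
          omega)
      have hijne : i ≠ j := by rintro rfl; exact Finset.disjoint_left.1 hdis hi hj
      have e2 := hasIso_pair z i j hijne (c i) (c j) (hc i (by simp [hi])) (hc j (by simp [hj]))
        (1 + s i * I) (hPl i hi) (by rw [hMi j hj, hij])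
      refine (e.union e2 ?_).mono ?_ le_rfl
      · rw [Finset.disjoint_left]
        intro l hl hl'
        simp only [Finset.mem_insert, Finset.mem_singleton] at hl'
        simp only [Finset.mem_union, Finset.mem_erase] at hl
        rcases hl' with rfl | rfl
        · rcases hl with hl | hl
          · exact hl.1 rfl
          · exact Finset.disjoint_left.1 hdis hi hl.2
        · rcases hl with hl | hl
          · exact Finset.disjoint_left.1 hdis hl.2 hj
          · exact hl.1 rfl
      · refine Finset.union_subset hsub ?_
        intro l hl
        simp only [Finset.mem_insert, Finset.mem_singleton] at hl
        rcases hl with rfl | rfl <;> simp [hi, hj]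

/-- lexicographic half plane -/
def lexL (σ : ℝ) (w : ℂ) : Prop := 0 < w.re ∨ (w.re = 0 ∧ 0 ≤ σ * w.im)

lemma HasIso.of_mul {ι : Type*} [Fintype ι] {z : ι → ℂ} {F : Finset ι} {k : ℕ} (v : ℂ) (hv : v ≠ 0)
    (h : HasIso (fun i => v * z i) F k) : HasIso z F k := by
  obtain ⟨V, h1, h2, h3⟩ := h
  refine ⟨V, h1, h2, fun x hx y hy => ?_⟩
  have := h3 x hx y hy
  simp_rw [mul_assoc] at this
  rw [← Finset.mul_sum] at this
  exact (mul_eq_zero.1 this).resolve_left hv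

open Classical in
lemma finite_iso {ι : Type*} [Fintype ι] (z : ι → ℂ) (k : ℕ)
    (h : ∀ u : ℂ, u ≠ 0 → ∀ σ : ℝ, (σ = 1 ∨ σ = -1) →
      k ≤ (Finset.univ.filter (fun i => lexL σ (u * z i))).card) :
    HasIso z Finset.univ k := by
  set NZ : Finset ι := Finset.univ.filter (fun i => z i ≠ 0) with hNZ
  set Z : Finset ι := Finset.univ.filter (fun i => z i = 0) with hZ
  have hex : ∃ n : ℕ, ∃ u : ℂ, u ≠ 0 ∧ ∃ σ : ℝ, (σ = 1 ∨ σ = -1) ∧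
      (NZ.filter (fun i => lexL σ (u * z i))).card = n := ⟨_, 1, one_ne_zero, 1, Or.inl rfl, rfl⟩
  obtain ⟨u0, hu0, σ0, hσ0, hm⟩ := Nat.find_spec hex
  have hmin : ∀ u : ℂ, u ≠ 0 → ∀ σ : ℝ, (σ = 1 ∨ σ = -1) →
      Nat.find hex ≤ (NZ.filter (fun i => lexL σ (u * z i))).card :=
    fun u hu σ hσ => Nat.find_min' hex ⟨u, hu, σ, hσ, rfl⟩
  set m := Nat.find hex
  have hdZ : Disjoint Z NZ := by
    rw [Finset.disjoint_left]; intro i hi hi'; simp [Z, NZ] at hi hi'; exact hi' hi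
  have hkm : k ≤ Z.card + m := by
    refine (h u0 hu0 σ0 hσ0).trans ?_
    rw [← hm]
    refine (Finset.card_le_card ?_).trans (Finset.card_union_le _ _)
    intro i hi
    simp only [Finset.mem_filter, Finset.mem_univ, true_and] at hi
    by_cases hz : z i = 0
    · exact Finset.mem_union_left _ (by simp [Z, hz])
    · exact Finset.mem_union_right _ (by simp [NZ, hz, hi])
  have hη : ∃ η : ℝ, 0 < η ∧ ∀ i ∈ NZ,
      (lexL σ0 (u0 * z i) → 0 < (u0 * z i).re + η * (σ0 * (u0 * z i).im)) ∧
      (¬ lexL σ0 (u0 * z i) → (u0 * z i).re + η * (σ0 * (u0 * z i).im) < 0) := by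
    have hev : ∀ᶠ η in nhdsWithin (0:ℝ) (Set.Ioi 0), ∀ i ∈ NZ,
      (lexL σ0 (u0 * z i) → 0 < (u0 * z i).re + η * (σ0 * (u0 * z i).im)) ∧
      (¬ lexL σ0 (u0 * z i) → (u0 * z i).re + η * (σ0 * (u0 * z i).im) < 0) := by
      rw [Filter.eventually_all_finset]
      intro i hi
      have hzi : z i ≠ 0 := by simpa [NZ] using hi
      have hwi : u0 * z i ≠ 0 := mul_ne_zero hu0 hzi
      generalize u0 * z i = w at hwi
      have hlim : Filter.Tendsto (fun η : ℝ => w.re + η * (σ0 * w.im)) (nhdsWithin (0:ℝ) (Set.Ioi 0)) (nhds w.re) := by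
        have : Continuous (fun η : ℝ => w.re + η * (σ0 * w.im)) := by fun_prop
        have h2 := this.tendsto 0
        simp only [zero_mul, add_zero] at h2
        exact h2.mono_left nhdsWithin_le_nhds
      have hpos : ∀ᶠ η in nhdsWithin (0:ℝ) (Set.Ioi 0), 0 < η := self_mem_nhdsWithin
      rcases lt_trichotomy w.re 0 with hre | hre | hre
      · have hl : ¬ lexL σ0 w := by
          rintro (h | h)
          · linarith
          · linarith [h.1]
        filter_upwards [hlim.eventually_lt_const hre] with η hη
        exact ⟨fun h => absurd h hl, fun _ => hη⟩
      · have him : w.im ≠ 0 := fun h => hwi (Complex.ext hre h)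
        have him' : σ0 * w.im ≠ 0 := mul_ne_zero (by rcases hσ0 with rfl | rfl <;> norm_num) him
        filter_upwards [hpos] with η hη
        constructor
        · rintro (h | h)
          · linarith
          · rw [hre, zero_add]; exact mul_pos hη (lt_of_le_of_ne h.2 him'.symm)
        · intro h
          rw [hre, zero_add]
          refine mul_neg_of_pos_of_neg hη ?_
          by_contra! hc
          exact h (Or.inr ⟨hre, hc⟩)
      · have hl : lexL σ0 w := Or.inl hre
        filter_upwards [hlim.eventually_const_lt hre] with η hη
        exact ⟨fun _ => hη, fun h => absurd hl h⟩
    obtain ⟨η, h1, h2⟩ := (hev.and self_mem_nhdsWithin).exists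
    exact ⟨η, h2, h1⟩
  obtain ⟨η, hη0, hη⟩ := hη
  obtain ⟨v, hv⟩ : ∃ v : ℂ, v = u0 * (1 - (η * σ0 : ℝ) * I) := ⟨_, rfl⟩
  have hv0 : v ≠ 0 := by
    rw [hv]
    refine mul_ne_zero hu0 (fun h => ?_)
    have := congrArg Complex.re h
    simp at this
  have hvre : ∀ i, (v * z i).re = (u0 * z i).re + η * (σ0 * (u0 * z i).im) := by
    intro i
    have : v * z i = (u0 * z i) * (1 - (η * σ0 : ℝ) * I) := by rw [hv]; ring
    rw [this, Complex.mul_re]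
    simp
    ring
  set Pl := NZ.filter (fun i => 0 < (v * z i).re) with hPldef
  set Mi := NZ.filter (fun i => (v * z i).re < 0) with hMidef
  let s : ι → ℝ := fun i => (v * z i).im / (v * z i).re
  let c : ι → ℝ := fun i => |(v * z i).re|
  have hPlm : Pl.card = m := by
    rw [← hm]
    congr 1
    refine Finset.filter_congr (fun i hi => ?_)
    rw [hvre]
    constructor
    · intro h
      by_contra hc
      linarith [(hη i hi).2 hc]
    · exact (hη i hi).1
  have hne : ∀ i ∈ NZ, (v * z i).re ≠ 0 := by
    intro i hi
    rw [hvre]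
    by_cases hl : lexL σ0 (u0 * z i)
    · exact ((hη i hi).1 hl).ne'
    · exact ((hη i hi).2 hl).ne
  have hmain : HasIso (fun i => v * z i) (Pl ∪ Mi) m := by
    refine comb_weak (fun i => v * z i) c s m Pl Mi hPlm ?_ ?_ ?_ ?_ ?_ ?_
    · rw [Finset.disjoint_left]; intro i hi hi'
      rw [Finset.mem_filter] at hi hi'
      linarith [hi.2, hi'.2]
    · intro i hi
      simp only [Pl, Mi, Finset.mem_union, Finset.mem_filter] at hi
      exact abs_pos.2 (by rcases hi with hi | hi; exacts [hi.2.ne', hi.2.ne])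
    · intro i hi
      rw [Finset.mem_filter] at hi
      have h0 := hi.2
      apply Complex.ext
      · simp only [c, s, abs_of_pos h0]
        generalize v * z i = w at *
        simp
      · simp only [c, s, abs_of_pos h0]
        have : (v * z i).re ≠ 0 := h0.ne'
        generalize v * z i = w at *
        simp
        field_simp
    · intro i hi
      rw [Finset.mem_filter] at hi
      have h0 := hi.2
      apply Complex.ext
      · simp only [c, s, abs_of_neg h0]
        generalize v * z i = w at *
        simp
      · simp only [c, s, abs_of_neg h0]
        have : (v * z i).re ≠ 0 := h0.ne
        generalize v * z i = w at *
        simp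
        field_simp
    · intro t
      have e1 := hmin ((-t - I) * v) (mul_ne_zero (fun h => by simpa using congrArg Complex.im h) hv0) 1 (Or.inl rfl)
      have e2 : NZ.filter (fun i => lexL 1 ((-t - I) * v * z i)) ⊆
          Pl.filter (fun i => ¬ s i ≤ t) ∪ Mi.filter (fun i => s i ≤ t) := by
        intro i hi
        rw [Finset.mem_filter] at hi
        obtain ⟨hi, hl⟩ := hi
        have hx := hne i hi
        simp only [Finset.mem_union, Finset.mem_filter, Pl, Mi, hi, true_and, s]
        rw [mul_assoc] at hl
        generalize v * z i = w at *
        simp only [lexL, Complex.mul_re, Complex.mul_im, Complex.sub_re, Complex.sub_im, Complex.neg_re,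
          Complex.neg_im, Complex.ofReal_re, Complex.ofReal_im, Complex.I_re, Complex.I_im] at hl
        rcases lt_or_gt_of_ne hx with hx | hx
        · right
          refine ⟨hx, ?_⟩
          rw [div_le_iff_of_neg hx]
          rcases hl with hl | hl
          · linarith
          · linarith [hl.1]
        · left
          refine ⟨hx, ?_⟩
          rw [not_le, lt_div_iff₀ hx]
          rcases hl with hl | hl
          · linarith
          · exfalso
            have him : w.im = t * w.re := by linarith [hl.1]
            have h2 := hl.2
            rw [him] at h2
            nlinarith [mul_nonneg hx.le (sq_nonneg t)]
      have e3 := (Finset.card_le_card e2).trans (Finset.card_union_le _ _)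
      have e4 := Finset.card_filter_add_card_filter_not (s := Pl) (fun i => s i ≤ t)
      rw [hPlm] at e4
      omega
    · intro t
      have e1 := hmin ((t + I) * v) (mul_ne_zero (fun h => by simpa using congrArg Complex.im h) hv0) (-1) (Or.inr rfl)
      have e2 : NZ.filter (fun i => lexL (-1) ((t + I) * v * z i)) ⊆
          Pl.filter (fun i => ¬ t ≤ s i) ∪ Mi.filter (fun i => t ≤ s i) := by
        intro i hi
        rw [Finset.mem_filter] at hi
        obtain ⟨hi, hl⟩ := hi
        have hx := hne i hi
        simp only [Finset.mem_union, Finset.mem_filter, Pl, Mi, hi, true_and, s]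
        rw [mul_assoc] at hl
        generalize v * z i = w at *
        simp only [lexL, Complex.mul_re, Complex.mul_im, Complex.add_re, Complex.add_im,
          Complex.ofReal_re, Complex.ofReal_im, Complex.I_re, Complex.I_im] at hl
        rcases lt_or_gt_of_ne hx with hx | hx
        · right
          refine ⟨hx, ?_⟩
          rw [le_div_iff_of_neg hx]
          rcases hl with hl | hl
          · linarith
          · linarith [hl.1]
        · left
          refine ⟨hx, ?_⟩
          rw [not_le, div_lt_iff₀ hx]
          rcases hl with hl | hl
          · linarith
          · exfalso
            have him : w.im = t * w.re := by linarith [hl.1]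
            have h2 := hl.2
            rw [him] at h2
            nlinarith [mul_nonneg hx.le (sq_nonneg t)]
      have e3 := (Finset.card_le_card e2).trans (Finset.card_union_le _ _)
      have e4 := Finset.card_filter_add_card_filter_not (s := Pl) (fun i => t ≤ s i)
      rw [hPlm] at e4
      omega
  have hNZm : HasIso z NZ m := (hmain.of_mul v hv0).mono
    (Finset.union_subset (Finset.filter_subset _ _) (Finset.filter_subset _ _)) le_rfl
  exact ((hasIso_zeros z Z (fun i hi => by simpa [Z] using hi)).union hNZm hdZ).mono
    (Finset.subset_univ _) hkm


lemma spec_proj {H : Type*} [NormedAddCommGroup H] [InnerProductSpace ℂ H] [CompleteSpace H]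
    (T : H →L[ℂ] H) (hT : IsSelfAdjoint T) :
    ∃ p : H →L[ℂ] H, IsSelfAdjoint p ∧ p * p = p ∧
      (∀ x, p x = x → (⟪x, T x⟫_ℂ).re ≤ 0) ∧
      (∀ x, p x = 0 → x ≠ 0 → 0 < (⟪x, T x⟫_ℂ).re) ∧
      (∀ S : H →L[ℂ] H, Commute S T → Commute S p) := by
  have hd : T⁺ - T⁻ = T := CFC.posPart_sub_negPart T hT
  have hm : T⁺ * T⁻ = 0 := CFC.posPart_mul_negPart T
  have hp0 : 0 ≤ T⁺ := CFC.posPart_nonneg T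
  have hn0 : 0 ≤ T⁻ := CFC.negPart_nonneg T
  have hpsa : IsSelfAdjoint T⁺ := .of_nonneg hp0
  have hnsa : IsSelfAdjoint T⁻ := .of_nonneg hn0
  have hpp := (ContinuousLinearMap.nonneg_iff_isPositive T⁺).1 hp0
  have hnp := (ContinuousLinearMap.nonneg_iff_isPositive T⁻).1 hn0
  obtain ⟨s, hs⟩ := CStarAlgebra.nonneg_iff_eq_star_mul_self.1 hp0
  have hTx : ∀ x, T x = T⁺ x - T⁻ x := fun x => by
    conv_lhs => rw [← hd]
    rfl
  let K : Submodule ℂ H := LinearMap.ker (T⁺ : H →L[ℂ] H).toLinearMap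
  have hKc : IsClosed (K : Set H) := (T⁺ : H →L[ℂ] H).isClosed_ker
  haveI : CompleteSpace K := hKc.completeSpace_coe
  have hKmem : ∀ x, x ∈ K ↔ T⁺ x = 0 := fun x => LinearMap.mem_ker
  refine ⟨K.starProjection, isSelfAdjoint_starProjection K, K.isIdempotentElem_starProjection,
    ?_, ?_, ?_⟩
  · intro x hx
    have hxK : x ∈ K := Submodule.starProjection_eq_self_iff.1 hx
    rw [hTx, (hKmem x).1 hxK, zero_sub, inner_neg_right, Complex.neg_re]
    have := hnp.re_inner_nonneg_right x
    simp at this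
    linarith
  · intro x hx hx0
    have hxK : x ∈ Kᗮ := (Submodule.starProjection_apply_eq_zero_iff K).1 hx
    have hn : T⁻ x = 0 := by
      have h1 : T⁻ (T⁻ x) ∈ K := by
        rw [hKmem]
        exact congrArg (fun f : H →L[ℂ] H => f (T⁻ x)) hm
      have h2 := (Submodule.mem_orthogonal K x).1 hxK _ h1
      have h3 : ⟪T⁻ x, T⁻ x⟫_ℂ = 0 := by
        rw [← h2]
        exact (hnsa.isSymmetric (T⁻ x) x).symm
      exact inner_self_eq_zero.1 h3
    rw [hTx, hn, sub_zero]
    have h0 := hpp.re_inner_nonneg_right x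
    refine lt_of_le_of_ne (by simpa using h0) (fun he => hx0 ?_)
    have h4 : ⟪x, T⁺ x⟫_ℂ = ⟪s x, s x⟫_ℂ := by
      rw [hs]
      exact ContinuousLinearMap.adjoint_inner_right s x (s x)
    have h5 : s x = 0 := by
      rw [h4] at he
      have : ‖s x‖ ^ 2 = 0 := by
        rw [← inner_self_eq_norm_sq (𝕜 := ℂ)]; exact he.symm
      simpa using this
    have h6 : x ∈ K := by
      rw [hKmem, hs]
      change (star s) (s x) = 0
      rw [h5, map_zero]
    have h7 := (Submodule.mem_orthogonal K x).1 hxK _ h6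
    exact inner_self_eq_zero.1 h7
  · intro S hS
    have key : ∀ S : H →L[ℂ] H, Commute S T → ∀ x ∈ K, S x ∈ K := by
      intro S hS x hx
      have hS' : Commute T⁺ S := by
        rw [CFC.posPart_def]
        exact hS.symm.cfcₙ_real _
      rw [hKmem] at hx ⊢
      have := congrArg (fun f : H →L[ℂ] H => f x) hS'.eq
      change T⁺ (S x) = S (T⁺ x) at this
      rw [this, hx, map_zero]
    have hS2 : Commute (star S) T := by
      have := hS.star_star
      rw [hT.star_eq] at this
      exact this
    have horth : ∀ x ∈ Kᗮ, S x ∈ Kᗮ := by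
      intro x hx
      rw [Submodule.mem_orthogonal] at hx ⊢
      intro u hu
      rw [← ContinuousLinearMap.adjoint_inner_left]
      exact hx _ (key _ hS2 u hu)
    ext x
    change S (K.starProjection x) = K.starProjection (S x)
    have e1 : S x = S (K.starProjection x) + S (x - K.starProjection x) := by
      rw [← map_add]; congr 1; abel
    rw [e1, map_add, Submodule.starProjection_eq_self_iff.2 (key S hS _ (K.starProjection_apply_mem x)),
      (Submodule.starProjection_apply_eq_zero_iff K).2 (horth _ (K.sub_starProjection_mem_orthogonal x)),
      add_zero]


/-- a commuting family of spectral half-plane projections of `B` -/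
structure PF {H : Type*} [NormedAddCommGroup H] [InnerProductSpace ℂ H] [CompleteSpace H]
    (B : H →L[ℂ] H) (p : ℂ → H →L[ℂ] H) : Prop where
  sa : ∀ d x y, ⟪p d x, y⟫_ℂ = ⟪x, p d y⟫_ℂ
  idem : ∀ d x, p d (p d x) = p d x
  nonneg : ∀ d x, p d x = x → 0 ≤ (d * ⟪x, B x⟫_ℂ).re
  neg : ∀ d x, p d x = 0 → x ≠ 0 → (d * ⟪x, B x⟫_ℂ).re < 0
  comm : ∀ d e x, p d (p e x) = p e (p d x)
  commB : ∀ d x, p d (B x) = B (p d x)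

lemma exists_PF {H : Type*} [NormedAddCommGroup H] [InnerProductSpace ℂ H] [CompleteSpace H]
    (B : H →L[ℂ] H) (hB : Commute (star B) B) : ∃ p, PF B p := by
  let T : ℂ → H →L[ℂ] H := fun d => -(d • B + star d • star B)
  have hT : ∀ d, IsSelfAdjoint (T d) := by
    intro d
    change star (T d) = T d
    simp only [T, star_neg, star_add, star_smul, star_star]
    abel
  have hcB : ∀ d, Commute B (T d) := fun d =>
    (((Commute.refl B).smul_right d).add_right (hB.symm.smul_right (star d))).neg_right
  have hcB' : ∀ d, Commute (star B) (T d) := fun d =>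
    ((hB.smul_right d).add_right ((Commute.refl (star B)).smul_right (star d))).neg_right
  have hcT : ∀ d e, Commute (T d) (T e) := fun d e =>
    (((hcB e).smul_left d).add_left ((hcB' e).smul_left (star d))).neg_left
  have hre : ∀ d x, (⟪x, T d x⟫_ℂ).re = - (2 * (d * ⟪x, B x⟫_ℂ).re) := by
    intro d x
    have h1 : ⟪x, (star B) x⟫_ℂ = (starRingEnd ℂ) ⟪x, B x⟫_ℂ := by
      rw [inner_conj_symm]
      exact ContinuousLinearMap.adjoint_inner_right B x x
    have h2 : T d x = -(d • B x + star d • (star B) x) := rfl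
    rw [h2, inner_neg_right, inner_add_right, inner_smul_right, inner_smul_right, h1]
    generalize ⟪x, B x⟫_ℂ = w
    simp
    ring
  choose p h1 h2 h3 h4 h5 using fun d => spec_proj (T d) (hT d)
  have hB' : ∀ d, Commute B (p d) := fun d => h5 d B (hcB d)
  have hp : ∀ d e, Commute (p d) (p e) := fun d e => h5 e _ ((h5 d _ (hcT e d)).symm)
  refine ⟨p, ⟨fun d x y => (h1 d).isSymmetric x y, fun d x => congrArg (fun f : H →L[ℂ] H => f x) (h2 d),
    fun d x hx => ?_, fun d x hx hx0 => ?_, fun d e x => congrArg (fun f : H →L[ℂ] H => f x) (hp d e).eq,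
    fun d x => (congrArg (fun f : H →L[ℂ] H => f x) (hB' d).eq).symm⟩⟩
  · have := h3 d x hx
    rw [hre] at this
    linarith
  · have := h4 d x hx hx0
    rw [hre] at this
    linarith

section
variable {H : Type*} [NormedAddCommGroup H] [InnerProductSpace ℂ H] [CompleteSpace H]
  {B : H →L[ℂ] H} {p : ℂ → H →L[ℂ] H}

/-- decoupled basis -/
def Dec (B : H →L[ℂ] H) (p : ℂ → H →L[ℂ] H) (D : Set ℂ) (U : Submodule ℂ H) : Prop :=
  ∃ (n : ℕ) (b : Fin n → H), LinearIndependent ℂ b ∧ Submodule.span ℂ (Set.range b) = U ∧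
    (∀ i j, i ≠ j → ⟪b i, B (b j)⟫_ℂ = 0) ∧ ∀ i, ∀ d ∈ D, p d (b i) = b i ∨ p d (b i) = 0

lemma Dec.sup {D : Set ℂ} {U₁ U₂ : Submodule ℂ H} (h1 : Dec B p D U₁) (h2 : Dec B p D U₂)
    (hd : Disjoint U₁ U₂) (h12 : ∀ x ∈ U₁, ∀ y ∈ U₂, ⟪x, B y⟫_ℂ = 0 ∧ ⟪y, B x⟫_ℂ = 0) :
    Dec B p D (U₁ ⊔ U₂) := by
  obtain ⟨n, b, b1, b2, b3, b4⟩ := h1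
  obtain ⟨m, c, c1, c2, c3, c4⟩ := h2
  have hb : ∀ i, b i ∈ U₁ := fun i => b2 ▸ Submodule.subset_span ⟨i, rfl⟩
  have hc : ∀ i, c i ∈ U₂ := fun i => c2 ▸ Submodule.subset_span ⟨i, rfl⟩
  have hli : LinearIndependent ℂ (Sum.elim b c) := b1.sum_type c1 (by rw [b2, c2]; exact hd)
  refine ⟨n + m, Sum.elim b c ∘ finSumFinEquiv.symm, hli.comp _ finSumFinEquiv.symm.injective, ?_, ?_, ?_⟩
  · rw [Set.range_comp, finSumFinEquiv.symm.surjective.range_eq, Set.image_univ, Set.Sum.elim_range,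
      Submodule.span_union, b2, c2]
  · intro i j hij
    have hij' : finSumFinEquiv.symm i ≠ finSumFinEquiv.symm j := fun h => hij (finSumFinEquiv.symm.injective h)
    simp only [Function.comp]
    generalize finSumFinEquiv.symm i = i' at *
    generalize finSumFinEquiv.symm j = j' at *
    rcases i' with i' | i' <;> rcases j' with j' | j'
    · exact b3 _ _ (fun h => hij' (by rw [h]))
    · exact (h12 _ (hb _) _ (hc _)).1
    · exact (h12 _ (hb _) _ (hc _)).2
    · exact c3 _ _ (fun h => hij' (by rw [h]))
  · intro i d hd
    simp only [Function.comp]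
    generalize finSumFinEquiv.symm i = i'
    rcases i' with i' | i'
    · exact b4 _ _ hd
    · exact c4 _ _ hd

lemma polar_zero (B : H →L[ℂ] H) (U : Submodule ℂ H) (h : ∀ x ∈ U, ⟪x, B x⟫_ℂ = 0) :
    ∀ x ∈ U, ∀ y ∈ U, ⟪x, B y⟫_ℂ = 0 := by
  intro x hx y hy
  have e1 := h (x + y) (U.add_mem hx hy)
  have e2 := h (x + I • y) (U.add_mem hx (U.smul_mem _ hy))
  simp only [map_add, map_smul, inner_add_left, inner_add_right, inner_smul_left, inner_smul_right,
    h x hx, h y hy, Complex.conj_I] at e1 e2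
  have e3 : I * (⟪x, B y⟫_ℂ - ⟪y, B x⟫_ℂ) = 0 := by linear_combination e2
  have e4 := (mul_eq_zero.1 e3).resolve_left Complex.I_ne_zero
  linear_combination (1/2) * e1 + (1/2) * e4

/-- generalized eigenvector -/
lemma gen_eig (B T : H →L[ℂ] H) (U : Submodule ℂ H) [FiniteDimensional ℂ U] (hU : U ≠ ⊥)
    (hT : ∀ x ∈ U, x ≠ 0 → ⟪x, T x⟫_ℂ ≠ 0) :
    ∃ x ∈ U, x ≠ 0 ∧ ∃ t : ℂ, ∀ y ∈ U, ⟪y, B x⟫_ℂ = t * ⟪y, T x⟫_ℂ := by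
  have : Nontrivial U := Submodule.nontrivial_iff_ne_bot.2 hU
  let cmp : (H →L[ℂ] H) → (U →ₗ[ℂ] U) := fun S =>
    (U.orthogonalProjectionOnto : H →ₗ[ℂ] U) ∘ₗ (S : H →ₗ[ℂ] H) ∘ₗ U.subtype
  have hcmp : ∀ S (x y : U), ⟪(y : H), (cmp S x : H)⟫_ℂ = ⟪(y:H), S x⟫_ℂ := by
    intro S x y
    have : (cmp S x : H) = U.starProjection (S x) := rfl
    rw [this, ← Submodule.inner_starProjection_left_eq_right,
      Submodule.starProjection_eq_self_iff.2 y.2]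
  have hinj : Function.Injective (cmp T) := by
    rw [injective_iff_map_eq_zero]
    intro x hx
    by_contra hx0
    refine hT x x.2 (by simpa using hx0) ?_
    rw [← hcmp, hx]; simp
  let e := LinearEquiv.ofInjectiveEndo (cmp T) hinj
  obtain ⟨t, ht⟩ := Module.End.exists_eigenvalue (e.symm.toLinearMap ∘ₗ cmp B : Module.End ℂ U)
  obtain ⟨x, hx⟩ := ht.exists_hasEigenvector
  refine ⟨x, x.2, by simpa using hx.2, t, fun y hy => ?_⟩
  have h1 : e.symm (cmp B x) = t • x := hx.apply_eq_smul
  have h2 : cmp B x = t • cmp T x := by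
    have := congrArg e h1
    rw [e.apply_symm_apply, map_smul] at this
    exact this
  have h3 := hcmp B x ⟨y, hy⟩
  rw [h2] at h3
  simp only [Submodule.coe_smul, inner_smul_right] at h3
  rw [← h3]
  congr 1
  exact hcmp T x ⟨y, hy⟩

lemma decouple (hp : PF B p) (D : Set ℂ) (hD1 : (1:ℂ) ∈ D) (hD2 : (-1:ℂ) ∈ D) (hD3 : I ∈ D)
    (hD4 : -I ∈ D) (n : ℕ) : ∀ (U : Submodule ℂ H), FiniteDimensional ℂ U → Module.finrank ℂ U = n →
      (∀ d ∈ D, ∀ x ∈ U, p d x ∈ U) → Dec B p D U := by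
  induction n using Nat.strong_induction_on with
  | _ n ih =>
  intro U hfd hn hU
  by_cases hbot : U = ⊥
  · subst hbot
    exact ⟨0, Fin.elim0, linearIndependent_empty_type, by simp, fun i => i.elim0, fun i => i.elim0⟩
  by_cases h1 : n = 1
  · rw [h1] at hn
    obtain ⟨x, hx0, hx⟩ := finrank_eq_one_iff'.1 hn
    have hx0' : (x : H) ≠ 0 := by simpa using hx0
    refine ⟨1, fun _ => (x : H), ?_, ?_, ?_, ?_⟩
    · exact LinearIndependent.of_subsingleton (0 : Fin 1) hx0'
    · apply le_antisymm
      · rw [Submodule.span_le]; rintro _ ⟨_, rfl⟩; exact x.2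
      · intro y hy
        obtain ⟨c, hc⟩ := hx ⟨y, hy⟩
        have : y = c • (x : H) := by
          have := congrArg Subtype.val hc
          simpa using this.symm
        rw [this]
        exact Submodule.smul_mem _ _ (Submodule.subset_span ⟨0, rfl⟩)
    · intro i j hij; exact absurd (Subsingleton.elim i j) hij
    · intro _ d hd
      obtain ⟨c, hc⟩ := hx ⟨p d x, hU d hd _ x.2⟩
      have hc' : p d x = c • (x : H) := by
        have := congrArg Subtype.val hc
        simpa using this.symm
      have h2 := hp.idem d x
      rw [hc', map_smul, hc', smul_smul] at h2
      have h3 : (c * c - c) • (x : H) = 0 := by rw [sub_smul, h2, sub_self]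
      have h4 : c * (c - 1) = 0 := by
        have := (smul_eq_zero.1 h3).resolve_right hx0'
        linear_combination this
      rcases mul_eq_zero.1 h4 with h | h
      · right; rw [hc', h, zero_smul]
      · left; rw [hc', sub_eq_zero.1 h, one_smul]
  by_cases ha : ∃ d ∈ D, (∃ x ∈ U, x ≠ 0 ∧ p d x = x) ∧ (∃ x ∈ U, x ≠ 0 ∧ p d x = 0)
  · obtain ⟨d, hd, ⟨x, hxU, hx0, hx⟩, ⟨y, hyU, hy0, hy⟩⟩ := ha
    let N : Submodule ℂ H := LinearMap.eqLocus (p d : H →ₗ[ℂ] H) LinearMap.id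
    let M : Submodule ℂ H := LinearMap.ker (p d : H →ₗ[ℂ] H)
    have hN : ∀ z, z ∈ N ↔ p d z = z := fun z => Iff.rfl
    have hM : ∀ z, z ∈ M ↔ p d z = 0 := fun z => Iff.rfl
    have hsup : (U ⊓ N) ⊔ (U ⊓ M) = U := by
      refine le_antisymm (sup_le inf_le_left inf_le_left) (fun z hz => ?_)
      have : z = p d z + (z - p d z) := by abel
      rw [this]
      refine Submodule.add_mem_sup ⟨hU d hd z hz, ?_⟩ ⟨U.sub_mem hz (hU d hd z hz), ?_⟩
      · exact hp.idem d z
      · change p d (z - p d z) = 0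
        rw [map_sub, hp.idem, sub_self]
    have f1 : FiniteDimensional ℂ (U ⊓ N : Submodule ℂ H) := Submodule.finiteDimensional_of_le (inf_le_left (a := U))
    have f2 : FiniteDimensional ℂ (U ⊓ M : Submodule ℂ H) := Submodule.finiteDimensional_of_le (inf_le_left (a := U))
    have l1 : Module.finrank ℂ (U ⊓ N : Submodule ℂ H) < n := by
      rw [← hn]
      refine Submodule.finrank_lt_finrank_of_lt (lt_of_le_of_ne inf_le_left fun h => ?_)
      have : y ∈ U ⊓ N := h.ge hyU
      exact hy0 (((hN y).1 this.2).symm.trans hy)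
    have l2 : Module.finrank ℂ (U ⊓ M : Submodule ℂ H) < n := by
      rw [← hn]
      refine Submodule.finrank_lt_finrank_of_lt (lt_of_le_of_ne inf_le_left fun h => ?_)
      have : x ∈ U ⊓ M := h.ge hxU
      exact hx0 (hx.symm.trans ((hM x).1 this.2))
    rw [← hsup]
    refine (ih _ l1 _ f1 rfl ?_).sup (ih _ l2 _ f2 rfl ?_) ?_ ?_
    · intro e he z hz
      refine ⟨hU e he z hz.1, ?_⟩
      have := (hN z).1 hz.2
      change p d (p e z) = p e z
      rw [hp.comm, this]
    · intro e he z hz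
      refine ⟨hU e he z hz.1, ?_⟩
      have := (hM z).1 hz.2
      change p d (p e z) = 0
      rw [hp.comm, this, map_zero]
    · rw [Submodule.disjoint_def]
      intro z hz hz'
      exact ((hN z).1 hz.2).symm.trans ((hM z).1 hz'.2)
    · intro z hz w hw
      have e1 := (hN z).1 hz.2
      have e2 := (hM w).1 hw.2
      constructor
      · rw [← e1, hp.sa, hp.commB, e2, map_zero, inner_zero_right]
      · rw [← e1, ← hp.commB, ← hp.sa, e2, inner_zero_left]
  · have hdich : ∀ d ∈ D, (∀ x ∈ U, p d x = x) ∨ (∀ x ∈ U, p d x = 0) := by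
      intro d hd
      by_contra hcon
      push Not at hcon
      obtain ⟨⟨x, hx, hx'⟩, ⟨y, hy, hy'⟩⟩ := hcon
      exact ha ⟨d, hd, ⟨p d y, hU d hd y hy, hy', hp.idem d y⟩,
        ⟨x - p d x, U.sub_mem hx (hU d hd x hx), fun h => hx' (sub_eq_zero.1 h).symm,
          by rw [map_sub, hp.idem, sub_self]⟩⟩
    have hstab : ∀ W : Submodule ℂ H, W ≤ U → ∀ d ∈ D, ∀ x ∈ W, p d x ∈ W := by
      intro W hW d hd x hx
      rcases hdich d hd with h | h
      · rw [h x (hW hx)]; exact hx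
      · rw [h x (hW hx)]; exact W.zero_mem
    have hsplit : ∃ x ∈ U, ∃ w : H, ⟪w, x⟫_ℂ ≠ 0 ∧
        ∀ y ∈ U, ⟪w, y⟫_ℂ = 0 → ⟪x, B y⟫_ℂ = 0 ∧ ⟪y, B x⟫_ℂ = 0 := by
      by_cases hb : ∃ d ∈ D, ∀ x ∈ U, p d x = 0
      · obtain ⟨d, hd, hb⟩ := hb
        let T : H →L[ℂ] H := d • B + star d • star B
        have hTB : ∀ x y, ⟪y, T x⟫_ℂ = d * ⟪y, B x⟫_ℂ + star d * (starRingEnd ℂ) ⟪x, B y⟫_ℂ := by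
          intro x y
          have h1 : ⟪y, (star B) x⟫_ℂ = (starRingEnd ℂ) ⟪x, B y⟫_ℂ := by
            rw [inner_conj_symm]
            exact ContinuousLinearMap.adjoint_inner_right B y x
          have h2 : T x = (d • B x + star d • (star B) x) := rfl
          rw [h2, inner_add_right, inner_smul_right, inner_smul_right, h1]
        have hTne : ∀ x ∈ U, x ≠ 0 → ⟪x, T x⟫_ℂ ≠ 0 := by
          intro x hx hx0 h
          have h1 := hp.neg d x (hb x hx) hx0
          have h2 := congrArg Complex.re h
          rw [hTB] at h2
          generalize ⟪x, B x⟫_ℂ = w at *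
          simp at h1 h2
          linarith
        obtain ⟨x, hx, hx0, t, ht⟩ := gen_eig B T U hbot hTne
        have hd0 : d ≠ 0 := by
          rintro rfl
          have h1 := hp.neg 0 x (hb x hx) hx0
          simp at h1
        refine ⟨x, hx, T x, fun h => hTne x hx hx0 ?_, fun y hy hwy => ?_⟩
        · rw [← inner_conj_symm, h, map_zero]
        · have h1 : ⟪y, T x⟫_ℂ = 0 := by rw [← inner_conj_symm, hwy, map_zero]
          have h2 : ⟪y, B x⟫_ℂ = 0 := by rw [ht y hy, h1, mul_zero]
          have h3 := hTB x y
          rw [h1, h2, mul_zero, zero_add] at h3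
          have h4 := (mul_eq_zero.1 h3.symm).resolve_left (star_ne_zero.2 hd0)
          exact ⟨(map_eq_zero (starRingEnd ℂ)).1 h4, h2⟩
      · have hall : ∀ d ∈ D, ∀ x ∈ U, p d x = x := by
          intro d hd
          rcases hdich d hd with h | h
          · exact h
          · exact absurd ⟨d, hd, h⟩ hb
        have hz : ∀ x ∈ U, ⟪x, B x⟫_ℂ = 0 := by
          intro x hx
          have a1 := hp.nonneg _ x (hall _ hD1 x hx)
          have a2 := hp.nonneg _ x (hall _ hD2 x hx)
          have a3 := hp.nonneg _ x (hall _ hD3 x hx)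
          have a4 := hp.nonneg _ x (hall _ hD4 x hx)
          generalize ⟪x, B x⟫_ℂ = w at *
          simp at a1 a2 a3 a4
          exact Complex.ext (le_antisymm a2 a1) (le_antisymm a3 a4)
        have hzz := polar_zero B U hz
        obtain ⟨x, hx, hx0⟩ := Submodule.exists_mem_ne_zero_of_ne_bot hbot
        exact ⟨x, hx, x, inner_self_ne_zero.2 hx0, fun y hy _ => ⟨hzz x hx y hy, hzz y hy x hx⟩⟩
    obtain ⟨x, hx, w, hwx, hw⟩ := hsplit
    have hx0 : x ≠ 0 := by rintro rfl; simp at hwx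
    let W : Submodule ℂ H := (Submodule.span ℂ {w})ᗮ
    have hWm : ∀ y, y ∈ W ↔ ⟪w, y⟫_ℂ = 0 := fun y => Submodule.mem_orthogonal_singleton_iff_inner_right
    have hspan : Submodule.span ℂ {x} ≤ U := by
      rw [Submodule.span_le]; simpa using hx
    have hsup : (Submodule.span ℂ {x}) ⊔ (U ⊓ W) = U := by
      refine le_antisymm (sup_le hspan inf_le_left) (fun z hz => ?_)
      have : z = (⟪w, z⟫_ℂ / ⟪w, x⟫_ℂ) • x + (z - (⟪w, z⟫_ℂ / ⟪w, x⟫_ℂ) • x) := by abel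
      rw [this]
      refine Submodule.add_mem_sup (Submodule.smul_mem _ _ (Submodule.mem_span_singleton_self x))
        ⟨U.sub_mem hz (U.smul_mem _ hx), ?_⟩
      refine (hWm _).2 ?_
      rw [inner_sub_right, inner_smul_right, div_mul_cancel₀ _ hwx, sub_self]
    have f2 : FiniteDimensional ℂ (U ⊓ W : Submodule ℂ H) := Submodule.finiteDimensional_of_le (inf_le_left (a := U))
    have l1 : Module.finrank ℂ (Submodule.span ℂ {x}) < n := by
      rw [finrank_span_singleton hx0]
      have : n ≠ 0 := by
        rw [← hn]
        intro h
        exact hbot (Submodule.finrank_eq_zero.1 h)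
      omega
    have l2 : Module.finrank ℂ (U ⊓ W : Submodule ℂ H) < n := by
      rw [← hn]
      refine Submodule.finrank_lt_finrank_of_lt (lt_of_le_of_ne inf_le_left fun h => ?_)
      have : x ∈ U ⊓ W := h.ge hx
      exact hwx ((hWm x).1 this.2)
    rw [← hsup]
    refine (ih _ l1 _ inferInstance rfl (hstab _ hspan)).sup (ih _ l2 _ f2 rfl (hstab _ inf_le_left)) ?_ ?_
    · rw [Submodule.disjoint_def]
      intro z hz hz'
      obtain ⟨c, rfl⟩ := Submodule.mem_span_singleton.1 hz
      have := (hWm _).1 hz'.2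
      rw [inner_smul_right] at this
      rw [(mul_eq_zero.1 this).resolve_right hwx, zero_smul]
    · intro z hz y hy
      obtain ⟨c, rfl⟩ := Submodule.mem_span_singleton.1 hz
      obtain ⟨h1, h2⟩ := hw y hy.1 ((hWm y).1 hy.2)
      constructor
      · rw [inner_smul_left, h1, mul_zero]
      · rw [map_smul, inner_smul_right, h2, mul_zero]

end


lemma exists_sub {H : Type*} [AddCommGroup H] [Module ℂ H] (V : Submodule ℂ H) (k : ℕ)
    (h : (k : Cardinal) ≤ Module.rank ℂ V) :
    ∃ W : Submodule ℂ H, W ≤ V ∧ FiniteDimensional ℂ W ∧ Module.finrank ℂ W = k := by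
  obtain ⟨v, hv⟩ := Module.le_rank_iff.1 h
  have hv' : LinearIndependent ℂ (fun i => (v i : H)) :=
    hv.map' V.subtype V.ker_subtype
  refine ⟨Submodule.span ℂ (Set.range fun i => (v i : H)), ?_, ?_, ?_⟩
  · rw [Submodule.span_le]
    rintro _ ⟨i, rfl⟩
    exact (v i).2
  · exact FiniteDimensional.span_of_finite ℂ (Set.finite_range _)
  · rw [finrank_span_eq_card hv', Fintype.card_fin]

lemma sector (σ' δ : ℝ) (hδ : 0 < δ) (hσ' : σ' = 1 ∨ σ' = -1) (c : ℂ) (hc : 0 < c.re) (hc2 : |c.im| < δ * c.re) :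
    ∃ σ : ℝ, (σ = 1 ∨ σ = -1) ∧ ∀ w : ℂ, 0 ≤ w.re → 0 ≤ w.re + σ * δ * w.im → lexL σ' (c * w) := by
  rw [abs_lt] at hc2
  obtain ⟨h1, h2⟩ := hc2
  rcases lt_trichotomy c.im 0 with hi | hi | hi
  · refine ⟨1, Or.inl rfl, fun w hw1 hw2 => ?_⟩
    simp only [lexL, Complex.mul_re, Complex.mul_im]
    rcases lt_trichotomy w.im 0 with hw | hw | hw
    · left; nlinarith
    · rcases hw1.lt_or_eq with ha | ha
      · left; rw [hw]; nlinarith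
      · right; rw [hw, ← ha]; simp
    · left; nlinarith
  · refine ⟨σ', hσ', fun w hw1 hw2 => ?_⟩
    simp only [lexL, Complex.mul_re, Complex.mul_im, hi]
    rcases hw1.lt_or_eq with ha | ha
    · left; nlinarith
    · right
      rw [← ha] at hw2 ⊢
      refine ⟨by simp, ?_⟩
      have : 0 ≤ σ' * w.im := by
        by_contra! hh
        nlinarith
      nlinarith
  · refine ⟨-1, Or.inr rfl, fun w hw1 hw2 => ?_⟩
    simp only [lexL, Complex.mul_re, Complex.mul_im]
    rcases lt_trichotomy w.im 0 with hw | hw | hw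
    · left; nlinarith
    · rcases hw1.lt_or_eq with ha | ha
      · left; rw [hw]; nlinarith
      · right; rw [hw, ← ha]; simp
    · left; nlinarith

lemma lexL_smul (σ : ℝ) (t : ℝ) (ht : 0 < t) (w : ℂ) (h : lexL σ w) : lexL σ (t * w) := by
  rcases h with h | ⟨h, h'⟩
  · left; simp; positivity
  · right
    simp [h]
    nlinarith

section
variable {H : Type*} [NormedAddCommGroup H] [InnerProductSpace ℂ H] [CompleteSpace H]
  {B : H →L[ℂ] H} {p : ℂ → H →L[ℂ] H}

/-- there is an isotropic subspace of dimension `k` -/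
def IsoH (B : H →L[ℂ] H) (k : ℕ) : Prop :=
  ∃ V : Submodule ℂ H, FiniteDimensional ℂ V ∧ Module.finrank ℂ V = k ∧
    ∀ x ∈ V, ∀ y ∈ V, ⟪x, B y⟫_ℂ = 0

lemma IsoH_of_HasIso (n : ℕ) (b : Fin n → H) (hb : LinearIndependent ℂ b)
    (h0 : ∀ i j, i ≠ j → ⟪b i, B (b j)⟫_ℂ = 0) (k : ℕ)
    (h : HasIso (fun i => ⟪b i, B (b i)⟫_ℂ) Finset.univ k) : IsoH B k := by
  obtain ⟨V, h1, -, h3⟩ := h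
  let f : (Fin n → ℂ) →ₗ[ℂ] H := Fintype.linearCombination ℂ b
  have hf : Function.Injective f := by
    exact hb.fintypeLinearCombination_injective
  have hrank : Module.finrank ℂ (V.map f) = Module.finrank ℂ V :=
    (Submodule.equivMapOfInjective f hf V).finrank_eq.symm
  obtain ⟨W, hW, hfd, hWk⟩ := exists_sub (V.map f) k (by
    rw [← Module.finrank_eq_rank, hrank]
    exact_mod_cast h1)
  refine ⟨W, hfd, hWk, fun x hx y hy => ?_⟩
  obtain ⟨x, hx', rfl⟩ := hW hx
  obtain ⟨y, hy', rfl⟩ := hW hy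
  rw [← h3 x hx' y hy']
  simp only [f, Fintype.linearCombination_apply, map_sum, map_smul, sum_inner, inner_sum,
    inner_smul_left, inner_smul_right]
  refine Finset.sum_congr rfl (fun i _ => ?_)
  rw [Finset.sum_eq_single i]
  · ring
  · intro j _ hj
    rw [h0 _ _ hj]; ring
  · simp

/-- range of the projection -/
def NN (p : ℂ → H →L[ℂ] H) (d : ℂ) : Submodule ℂ H :=
  LinearMap.eqLocus (p d : H →ₗ[ℂ] H) LinearMap.id

lemma mem_NN (d : ℂ) (x : H) : x ∈ NN p d ↔ p d x = x := Iff.rfl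

/-- perturbed direction -/
def dir (v : ℂ) (σ δ : ℝ) : ℂ := v * (1 - (σ * δ : ℝ) * I)

lemma dir_re (v : ℂ) (σ δ : ℝ) (w : ℂ) : (dir v σ δ * w).re = (v * w).re + σ * δ * (v * w).im := by
  have : dir v σ δ * w = (v * w) * (1 - (σ * δ : ℝ) * I) := by rw [dir]; ring
  rw [this, Complex.mul_re]
  simp
  ring

/-- sector subspace -/
def QE (p : ℂ → H →L[ℂ] H) (v : ℂ) (σ δ : ℝ) : Submodule ℂ H := NN p v ⊓ NN p (dir v σ δ)

lemma QE_mono (hp : PF B p) (v : ℂ) (σ δ δ' : ℝ) (h0 : 0 < δ') (h : δ' ≤ δ) :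
    QE p v σ δ ≤ QE p v σ δ' := by
  intro x hx
  have h1 : p v x = x := hx.1
  have h2 : p (dir v σ δ) x = x := hx.2
  refine ⟨h1, ?_⟩
  change p (dir v σ δ') x = x
  by_contra hne
  set z := x - p (dir v σ δ') x with hz
  have hz0 : z ≠ 0 := fun h => hne (sub_eq_zero.1 h).symm
  have e1 : p v z = z := by rw [hz, map_sub, hp.comm, h1]
  have e2 : p (dir v σ δ) z = z := by rw [hz, map_sub, hp.comm, h2]
  have e3 : p (dir v σ δ') z = 0 := by rw [hz, map_sub, hp.idem, sub_self]
  have g1 := hp.nonneg _ _ e1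
  have g2 := hp.nonneg _ _ e2
  have g3 := hp.neg _ _ e3 hz0
  rw [dir_re] at g2 g3
  generalize v * ⟪z, B z⟫_ℂ = w at *
  nlinarith

lemma exists_stable (hp : PF B p) (D : Finset ℂ) : ∀ U : Submodule ℂ H, FiniteDimensional ℂ U →
    ∃ U' : Submodule ℂ H, U ≤ U' ∧ FiniteDimensional ℂ U' ∧ (∀ d ∈ D, ∀ x ∈ U', p d x ∈ U') := by
  induction D using Finset.induction_on with
  | empty => intro U hU; exact ⟨U, le_rfl, hU, by simp⟩
  | insert d D hd ih =>
    intro U hU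
    obtain ⟨U', h1, h2, h3⟩ := ih U hU
    refine ⟨U' ⊔ U'.map (p d : H →ₗ[ℂ] H), h1.trans le_sup_left, inferInstance, ?_⟩
    intro e he x hx
    obtain ⟨a, ha, b, hb, rfl⟩ := Submodule.mem_sup.1 hx
    obtain ⟨b, hb, rfl⟩ := hb
    rw [map_add]
    rcases Finset.mem_insert.1 he with rfl | he
    · refine Submodule.mem_sup_right ?_
      refine Submodule.add_mem _ ⟨a, ha, rfl⟩ ⟨b, hb, ?_⟩
      exact (hp.idem e b).symm
    · refine Submodule.add_mem_sup (h3 e he a ha) ⟨p e b, h3 e he b hb, ?_⟩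
      exact hp.comm _ _ _

open Classical in
lemma count_basis (hp : PF B p) {D : Set ℂ} (n : ℕ) (b : Fin n → H)
    (hb : ∀ i, ∀ d ∈ D, p d (b i) = b i ∨ p d (b i) = 0) (d e : ℂ) (hd : d ∈ D) (he : e ∈ D)
    (V : Submodule ℂ H) (hV : V ≤ Submodule.span ℂ (Set.range b)) (hVQ : V ≤ NN p d ⊓ NN p e) :
    Module.finrank ℂ V ≤ (Finset.univ.filter (fun i => p d (b i) = b i ∧ p e (b i) = b i)).card := by
  set J := Finset.univ.filter (fun i => p d (b i) = b i ∧ p e (b i) = b i) with hJ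
  have hle : V ≤ Submodule.span ℂ ((J.image b : Finset H) : Set H) := by
    intro x hx
    have hx1 : p d x = x := (hVQ hx).1
    have hx2 : p e x = x := (hVQ hx).2
    have hx3 : (p e * p d) x ∈ (Submodule.span ℂ (Set.range b)).map ((p e * p d : H →L[ℂ] H) : H →ₗ[ℂ] H) :=
      ⟨x, hV hx, rfl⟩
    have hx4 : (p e * p d) x = x := by change p e (p d x) = x; rw [hx1, hx2]
    rw [hx4, Submodule.map_span] at hx3
    refine Submodule.span_le.2 ?_ hx3
    rintro _ ⟨_, ⟨i, rfl⟩, rfl⟩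
    change p e (p d (b i)) ∈ Submodule.span ℂ ((J.image b : Finset H) : Set H)
    rcases hb i d hd with h1 | h1
    · rcases hb i e he with h2 | h2
      · rw [h1, h2]
        refine Submodule.subset_span ?_
        rw [Finset.mem_coe]
        exact Finset.mem_image_of_mem _ (by simp [J, h1, h2])
      · rw [h1, h2]; exact Submodule.zero_mem _
    · rw [h1, map_zero]; exact Submodule.zero_mem _
  have : FiniteDimensional ℂ (Submodule.span ℂ ((J.image b : Finset H) : Set H)) := inferInstance
  calc Module.finrank ℂ V ≤ Module.finrank ℂ (Submodule.span ℂ ((J.image b : Finset H) : Set H)) :=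
        Submodule.finrank_mono hle
    _ ≤ (J.image b).card := finrank_span_finset_le_card _
    _ ≤ J.card := Finset.card_image_le

end


section
variable {H : Type*} [NormedAddCommGroup H] [InnerProductSpace ℂ H] [CompleteSpace H]
  {B : H →L[ℂ] H} {p : ℂ → H →L[ℂ] H}

lemma partD_small (hp : PF B p) (k : ℕ) (v : ℂ) (σ : ℝ)
    (h : ∀ δ : ℝ, 0 < δ → ¬ ((k : Cardinal) ≤ Module.rank ℂ (QE p v σ δ))) :
    ∃ M : Submodule ℂ H, FiniteDimensional ℂ M ∧ Module.finrank ℂ M < k ∧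
      (∀ m ∈ M, ∀ x ∈ Mᗮ, ⟪m, B x⟫_ℂ = 0 ∧ ⟪x, B m⟫_ℂ = 0) ∧
      ∀ x ∈ Mᗮ, x ≠ 0 → ¬ lexL σ (v * ⟪x, B x⟫_ℂ) := by
  have hfd : ∀ δ : ℝ, 0 < δ → FiniteDimensional ℂ (QE p v σ δ) := by
    intro δ hδ
    have h1 := not_le.1 (h δ hδ)
    exact Module.rank_lt_aleph0_iff.1 (h1.trans (Cardinal.natCast_lt_aleph0))
  have hlt : ∀ δ : ℝ, 0 < δ → Module.finrank ℂ (QE p v σ δ) < k := by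
    intro δ hδ
    have := hfd δ hδ
    have h1 := not_le.1 (h δ hδ)
    rw [← Module.finrank_eq_rank] at h1
    exact_mod_cast h1
  obtain ⟨⟨δ0, hδ0⟩, -, hmin⟩ := (InvImage.wf
    (fun δ : {δ : ℝ // 0 < δ} => k - Module.finrank ℂ (QE p v σ δ.1)) wellFounded_lt).has_min
    Set.univ ⟨⟨1, one_pos⟩, trivial⟩
  have hmax : ∀ δ : ℝ, 0 < δ → Module.finrank ℂ (QE p v σ δ) ≤ Module.finrank ℂ (QE p v σ δ0) := by
    intro δ hδ
    have h1 := hmin ⟨δ, hδ⟩ trivial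
    have h2 := hlt δ hδ
    have h3 := hlt δ0 hδ0
    simp only [InvImage] at h1
    omega
  have heq : ∀ δ : ℝ, 0 < δ → δ ≤ δ0 → QE p v σ δ0 = QE p v σ δ := by
    intro δ hδ hle
    have := hfd δ hδ
    exact Submodule.eq_of_le_of_finrank_le (QE_mono hp v σ δ0 δ hδ hle) (hmax δ hδ)
  have hE : ∀ δ : ℝ, 0 < δ → δ ≤ δ0 → ∀ x ∈ (QE p v σ δ0)ᗮ, p (dir v σ δ) (p v x) = 0 := by
    intro δ hδ hle x hx
    have h1 : p (dir v σ δ) (p v x) ∈ QE p v σ δ0 := by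
      rw [heq δ hδ hle]
      refine ⟨?_, hp.idem _ _⟩
      change p v (p (dir v σ δ) (p v x)) = p (dir v σ δ) (p v x)
      rw [hp.comm v, hp.idem]
    have h2 := (Submodule.mem_orthogonal _ x).1 hx _ h1
    have h3 : ⟪p (dir v σ δ) (p v x), p (dir v σ δ) (p v x)⟫_ℂ = 0 := by
      rw [hp.sa, hp.idem, hp.sa, hp.comm v, hp.idem]
      exact inner_eq_zero_symm.1 h2
    exact inner_self_eq_zero.1 h3
  refine ⟨QE p v σ δ0, hfd δ0 hδ0, hlt δ0 hδ0, ?_, ?_⟩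
  · intro m hm x hx
    have h1 : p v m = m := hm.1
    have h2 : p (dir v σ δ0) m = m := hm.2
    constructor
    · rw [← h2, hp.sa, ← h1, hp.sa, hp.commB, hp.commB, hp.comm, hE δ0 hδ0 le_rfl x hx, map_zero,
        inner_zero_right]
    · have : B m ∈ QE p v σ δ0 := by
        constructor
        · change p v (B m) = B m
          rw [hp.commB, h1]
        · change p (dir v σ δ0) (B m) = B m
          rw [hp.commB, h2]
      exact (Submodule.mem_orthogonal' _ x).1 hx _ this
  · intro x hx hx0 hlex
    obtain ⟨y, hy⟩ : ∃ y, y = p v x := ⟨_, rfl⟩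
    obtain ⟨z, hz⟩ : ∃ z, z = x - y := ⟨_, rfl⟩
    have hxyz : x = y + z := by rw [hz]; abel
    have hy1 : p v y = y := by rw [hy, hp.idem]
    have hz1 : p v z = 0 := by rw [hz, map_sub, hy1, hy, sub_self]
    have c1 : ⟪y, B z⟫_ℂ = 0 := by rw [← hy1, hp.sa, hp.commB, hz1, map_zero, inner_zero_right]
    have c2 : ⟪z, B y⟫_ℂ = 0 := by rw [← hy1, ← hp.commB, ← hp.sa, hz1, inner_zero_left]
    have hsplit : v * ⟪x, B x⟫_ℂ = v * ⟪y, B y⟫_ℂ + v * ⟪z, B z⟫_ℂ := by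
      rw [hxyz, map_add, inner_add_left, inner_add_right, inner_add_right, c1, c2]; ring
    have hyneg : y ≠ 0 → (v * ⟪y, B y⟫_ℂ).re = 0 ∧ σ * (v * ⟪y, B y⟫_ℂ).im < 0 := by
      intro hy0
      have g1 := hp.nonneg v y hy1
      have g2 : ∀ δ : ℝ, 0 < δ → δ ≤ δ0 →
          (v * ⟪y, B y⟫_ℂ).re + δ * (σ * (v * ⟪y, B y⟫_ℂ).im) < 0 := by
        intro δ hδ hle
        have := hp.neg (dir v σ δ) y (by rw [hy]; exact hE δ hδ hle x hx) hy0
        rw [dir_re] at this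
        linarith
      generalize v * ⟪y, B y⟫_ℂ = w at *
      have g3 := g2 δ0 hδ0 le_rfl
      generalize σ * w.im = c at *
      have hc : c < 0 := by
        by_contra! hh
        nlinarith
      refine ⟨?_, hc⟩
      by_contra hne
      have ha : 0 < w.re := lt_of_le_of_ne g1 (Ne.symm hne)
      have hc' : 0 < -c := by linarith
      have := g2 (w.re / (-c)) (by positivity) (by rw [div_le_iff₀ hc']; linarith)
      have e : w.re / (-c) * c = - w.re := by
        rw [div_neg, neg_mul, div_mul_cancel₀ _ hc.ne]
      rw [e] at this
      linarith
    have hzneg : z ≠ 0 → (v * ⟪z, B z⟫_ℂ).re < 0 := fun hz0 => hp.neg v z hz1 hz0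
    rw [hsplit] at hlex
    by_cases hz0 : z = 0
    · have hy0 : y ≠ 0 := by
        rintro rfl
        exact hx0 (by rw [hxyz, hz0, add_zero])
      obtain ⟨g1, g2⟩ := hyneg hy0
      rw [hz0] at hlex
      simp only [map_zero, inner_zero_left, mul_zero, add_zero] at hlex
      rcases hlex with h | h
      · linarith
      · linarith [h.2]
    · have g := hzneg hz0
      have g' : (v * ⟪y, B y⟫_ℂ).re ≤ 0 := by
        by_cases hy0 : y = 0
        · rw [hy0]; simp
        · exact (hyneg hy0).1.le
      rcases hlex with h | h
      · rw [Complex.add_re] at h; linarith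
      · have := h.1
        rw [Complex.add_re] at this; linarith

open Classical in
lemma partD_large (hp : PF B p) (k : ℕ)
    (h : ∀ v : ℂ, ‖v‖ = 1 → ∀ σ : ℝ, (σ = 1 ∨ σ = -1) → ∃ δ : ℝ, 0 < δ ∧
      (k : Cardinal) ≤ Module.rank ℂ (QE p v σ δ)) : IsoH B k := by
  have hδ : ∀ v : ℂ, ∃ δ : ℝ, ‖v‖ = 1 → 0 < δ ∧ ∀ σ : ℝ, (σ = 1 ∨ σ = -1) →
      (k : Cardinal) ≤ Module.rank ℂ (QE p v σ δ) := by
    intro v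
    by_cases hv : ‖v‖ = 1
    · obtain ⟨a, ha, ha'⟩ := h v hv 1 (Or.inl rfl)
      obtain ⟨b, hb, hb'⟩ := h v hv (-1) (Or.inr rfl)
      refine ⟨min a b, fun _ => ⟨lt_min ha hb, ?_⟩⟩
      rintro σ (rfl | rfl)
      · exact ha'.trans (Submodule.rank_mono (QE_mono hp v 1 a _ (lt_min ha hb) (min_le_left _ _)))
      · exact hb'.trans (Submodule.rank_mono (QE_mono hp v (-1) b _ (lt_min ha hb) (min_le_right _ _)))
    · exact ⟨0, fun h => absurd h hv⟩
  choose δ hδ using hδ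
  have hV : ∀ (v : ℂ) (σ : ℝ), ∃ V : Submodule ℂ H, FiniteDimensional ℂ V ∧
      (‖v‖ = 1 → (σ = 1 ∨ σ = -1) → V ≤ QE p v σ (δ v) ∧ Module.finrank ℂ V = k) := by
    intro v σ
    by_cases hv : ‖v‖ = 1 ∧ (σ = 1 ∨ σ = -1)
    · obtain ⟨W, h1, h2, h3⟩ := exists_sub _ k ((hδ v hv.1).2 σ hv.2)
      exact ⟨W, h2, fun _ _ => ⟨h1, h3⟩⟩
    · exact ⟨⊥, inferInstance, fun h1 h2 => absurd ⟨h1, h2⟩ hv⟩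
  choose V hVfd hV using hV
  obtain ⟨t, ht, hcov⟩ := (isCompact_sphere (0:ℂ) 1).elim_nhds_subcover
    (fun v => {u : ℂ | 0 < (u / v).re ∧ |(u / v).im| < δ v * (u / v).re}) (by
      intro v hv
      have hv1 : ‖v‖ = 1 := by simpa using hv
      have hv0 : v ≠ 0 := by rintro rfl; simp at hv1
      refine IsOpen.mem_nhds ?_ ?_
      · have hc : Continuous fun u : ℂ => u / v := by fun_prop
        have hr : Continuous fun u : ℂ => (u / v).re := Complex.continuous_re.comp hc
        have hi : Continuous fun u : ℂ => (u / v).im := Complex.continuous_im.comp hc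
        exact (isOpen_lt continuous_const hr).inter (isOpen_lt hi.abs (continuous_const.mul hr))
      · change 0 < (v / v).re ∧ |(v / v).im| < δ v * (v / v).re
        rw [div_self hv0]
        simpa using (hδ v hv1).1)
  have ht1 : ∀ v ∈ t, ‖v‖ = 1 := fun v hv => by simpa using ht v hv
  let D : Finset ℂ := (t ∪ t.image (fun v => dir v 1 (δ v)) ∪ t.image (fun v => dir v (-1) (δ v))) ∪
    {1, -1, I, -I}
  let U0 : Submodule ℂ H := t.sup (fun v => V v 1 ⊔ V v (-1))
  have hU0 : FiniteDimensional ℂ U0 := by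
    have : ∀ v, FiniteDimensional ℂ (V v 1 ⊔ V v (-1) : Submodule ℂ H) := by
      intro v
      have := hVfd v 1
      have := hVfd v (-1)
      infer_instance
    exact Submodule.finiteDimensional_finset_sup t _
  obtain ⟨U, hU1, hU2, hU3⟩ := exists_stable hp D U0 hU0
  obtain ⟨n, b, b1, b2, b3, b4⟩ := decouple hp (D : Set ℂ) (by simp [D]) (by simp [D]) (by simp [D])
    (by simp [D]) _ U hU2 rfl (fun d hd => hU3 d (by simpa using hd))
  refine IsoH_of_HasIso n b b1 b3 k (finite_iso _ k ?_)
  intro u hu σ' hσ'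
  have hun : 0 < ‖u‖ := norm_pos_iff.2 hu
  have hus : u / ‖u‖ ∈ Metric.sphere (0:ℂ) 1 := by
    simp [hu]
  obtain ⟨v, hvt, hvu⟩ := Set.mem_iUnion₂.1 (hcov hus)
  change 0 < (u / ‖u‖ / v).re ∧ |(u / ‖u‖ / v).im| < δ v * (u / ‖u‖ / v).re at hvu
  have hv1 := ht1 v hvt
  have hv0 : v ≠ 0 := by rintro rfl; simp at hv1
  obtain ⟨σ, hσ, hsec⟩ := sector σ' (δ v) (hδ v hv1).1 hσ' _ hvu.1 hvu.2
  obtain ⟨hVle, hVk⟩ := hV v σ hv1 hσ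
  have hVU : V v σ ≤ Submodule.span ℂ (Set.range b) := by
    rw [b2]
    refine le_trans ?_ hU1
    refine le_trans ?_ (Finset.le_sup (f := fun v => V v 1 ⊔ V v (-1)) hvt)
    rcases hσ with rfl | rfl
    · exact le_sup_left
    · exact le_sup_right
  have hcount := count_basis hp n b b4 v (dir v σ (δ v)) (by simp [D, hvt])
    (by
      rcases hσ with rfl | rfl
      · rw [Finset.mem_coe]
        exact Finset.mem_union_left _ (Finset.mem_union_left _ (Finset.mem_union_right _
          (Finset.mem_image_of_mem (fun v => dir v 1 (δ v)) hvt)))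
      · rw [Finset.mem_coe]
        exact Finset.mem_union_left _ (Finset.mem_union_right _
          (Finset.mem_image_of_mem (fun v => dir v (-1) (δ v)) hvt))) (V v σ) hVU hVle
  rw [hVk] at hcount
  refine hcount.trans (Finset.card_le_card ?_)
  intro i hi
  simp only [Finset.mem_filter, Finset.mem_univ, true_and] at hi ⊢
  have g1 := hp.nonneg _ _ hi.1
  have g2 := hp.nonneg _ _ hi.2
  rw [dir_re] at g2
  have g3 := lexL_smul σ' ‖u‖ hun _ (hsec _ g1 g2)
  convert g3 using 1
  have : (‖u‖ : ℂ) ≠ 0 := by exact_mod_cast hun.ne'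
  field_simp

/-- Part D -/
lemma partD (hB : Commute (star B) B) (k : ℕ) (h : ¬ IsoH B k) :
    ∃ v : ℂ, ‖v‖ = 1 ∧ ∃ σ : ℝ, (σ = 1 ∨ σ = -1) ∧
    ∃ M : Submodule ℂ H, FiniteDimensional ℂ M ∧ Module.finrank ℂ M < k ∧
      (∀ m ∈ M, ∀ x ∈ Mᗮ, ⟪m, B x⟫_ℂ = 0 ∧ ⟪x, B m⟫_ℂ = 0) ∧
      ∀ x ∈ Mᗮ, x ≠ 0 → ¬ lexL σ (v * ⟪x, B x⟫_ℂ) := by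
  obtain ⟨p, hp⟩ := exists_PF B hB
  by_contra hcon
  refine h (partD_large hp k fun v hv σ hσ => ?_)
  by_contra hc
  push Not at hc
  refine hcon ⟨v, hv, σ, hσ, partD_small hp k v σ fun δ hδ => not_le.2 (hc δ hδ)⟩

end


lemma isOrthProj_star (V : Submodule ℂ H) [FiniteDimensional ℂ V] : IsOrthProj V.starProjection :=
  ⟨isSelfAdjoint_starProjection V, V.isIdempotentElem_starProjection⟩

lemma opRank_star (V : Submodule ℂ H) [FiniteDimensional ℂ V] :
    opRank V.starProjection = (Module.finrank ℂ V : Cardinal) := by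
  unfold opRank
  rw [Submodule.range_starProjection, Module.finrank_eq_rank]

lemma mem_rankK_iff (k : ℕ) (A : H →L[ℂ] H) (lam : ℂ) :
    lam ∈ rankKRange k A ↔ IsoH (A - lam • (1 : H →L[ℂ] H)) k := by
  constructor
  · rintro ⟨P, ⟨hP1, hP2⟩, hP3, hP4⟩
    have hfin : Module.finrank ℂ (LinearMap.range (P : H →ₗ[ℂ] H)) = k :=
      Module.finrank_eq_of_rank_eq hP3
    refine ⟨LinearMap.range (P : H →ₗ[ℂ] H), Module.finite_of_rank_eq_nat hP3, hfin, ?_⟩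
    rintro _ ⟨x, rfl⟩ _ ⟨y, rfl⟩
    change ⟪P x, A (P y) - lam • P y⟫_ℂ = 0
    have h1 : P (P y) = P y := congrArg (fun f : H →L[ℂ] H => f y) hP2
    have h2 : P (A (P y)) = lam • P y := congrArg (fun f : H →L[ℂ] H => f y) hP4
    have h3 : ⟪P x, A (P y) - lam • P y⟫_ℂ = ⟪x, P (A (P y) - lam • P y)⟫_ℂ := hP1.isSymmetric _ _
    rw [h3, map_sub, map_smul, h1, h2, sub_self, inner_zero_right]
  · rintro ⟨V, hfd, hVk, hV⟩
    refine ⟨V.starProjection, isOrthProj_star V, by rw [opRank_star, hVk], ?_⟩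
    ext x
    change V.starProjection (A (V.starProjection x)) = lam • V.starProjection x
    refine ext_inner_left ℂ fun y => ?_
    have h1 := hV _ (V.starProjection_apply_mem y) _ (V.starProjection_apply_mem x)
    change ⟪V.starProjection y, A (V.starProjection x) - lam • V.starProjection x⟫_ℂ = 0 at h1
    rw [inner_sub_right, sub_eq_zero] at h1
    rw [← Submodule.inner_starProjection_left_eq_right, h1, inner_smul_right, inner_smul_right,
      Submodule.inner_starProjection_left_eq_right,
      Submodule.starProjection_eq_self_iff.2 (V.starProjection_apply_mem x)]

lemma partA (k r : ℕ) (B F : H →L[ℂ] H) (hF : opRank F ≤ r) (h : IsoH B k) : IsoH (B + F) (k - r) := by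
  obtain ⟨V, hfd, hVk, hV⟩ := h
  let f : V →ₗ[ℂ] H := (F : H →ₗ[ℂ] H) ∘ₗ V.subtype
  have h1 := LinearMap.finrank_range_add_finrank_ker f
  have h2 : Module.finrank ℂ (LinearMap.range f) ≤ r := by
    have h3 : Module.rank ℂ (LinearMap.range f) ≤ r :=
      (Submodule.rank_mono (LinearMap.range_comp_le_range _ _)).trans hF
    rw [← Module.finrank_eq_rank] at h3
    exact_mod_cast h3
  have h4 : Module.finrank ℂ ((LinearMap.ker f).map V.subtype) = Module.finrank ℂ (LinearMap.ker f) :=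
    (Submodule.equivMapOfInjective V.subtype V.injective_subtype _).finrank_eq.symm
  obtain ⟨W, hW, hWfd, hWk⟩ := exists_sub ((LinearMap.ker f).map V.subtype) (k - r) (by
    rw [← Module.finrank_eq_rank, h4]
    have : k - r ≤ Module.finrank ℂ (LinearMap.ker f) := by omega
    exact_mod_cast this)
  refine ⟨W, hWfd, hWk, fun x hx y hy => ?_⟩
  obtain ⟨x, hx', rfl⟩ := hW hx
  obtain ⟨y, hy', rfl⟩ := hW hy
  have hFy : F (y : H) = 0 := hy'
  change ⟪(x : H), B y + F y⟫_ℂ = 0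
  rw [hFy, add_zero]
  exact hV _ x.2 _ y.2

lemma exists_superspace (M : Submodule ℂ H) [FiniteDimensional ℂ M] (r : ℕ)
    (hM : Module.finrank ℂ M ≤ r) (hr : (r : Cardinal) ≤ Module.rank ℂ H) :
    ∃ N : Submodule ℂ H, M ≤ N ∧ FiniteDimensional ℂ N ∧ Module.finrank ℂ N = r := by
  induction r, hM using Nat.le_induction with
  | base => exact ⟨M, le_rfl, inferInstance, rfl⟩
  | succ n hn ih =>
    obtain ⟨N, h1, h2, h3⟩ := ih (le_trans (by exact_mod_cast Nat.le_succ n) hr)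
    have hne : ∃ x, x ∉ N := by
      by_contra! hcon
      have htop : N = ⊤ := by ext x; simp [hcon x]
      have h4 : Module.rank ℂ N = n := by rw [← Module.finrank_eq_rank, h3]
      rw [htop, rank_top] at h4
      rw [h4] at hr
      have : n + 1 ≤ n := by exact_mod_cast hr
      omega
    obtain ⟨x, hx⟩ := hne
    refine ⟨N ⊔ Submodule.span ℂ {x}, h1.trans le_sup_left, inferInstance, ?_⟩
    have hx0 : x ≠ 0 := by rintro rfl; exact hx N.zero_mem
    have u1 := Submodule.finrank_add_le_finrank_add_finrank N (Submodule.span ℂ {x})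
    rw [finrank_span_singleton hx0, h3] at u1
    have u2 : Module.finrank ℂ N < Module.finrank ℂ (N ⊔ Submodule.span ℂ {x} : Submodule ℂ H) := by
      refine Submodule.finrank_lt_finrank_of_lt (lt_of_le_of_ne le_sup_left fun h => hx ?_)
      rw [h]
      exact Submodule.mem_sup_right (Submodule.mem_span_singleton_self x)
    omega

lemma inner_bound (A : H →L[ℂ] H) (v : ℂ) (hv : ‖v‖ = 1) (x : H) :
    ‖v * ⟪x, A x⟫_ℂ‖ ≤ ‖A‖ * ‖x‖ ^ 2 := by
  rw [norm_mul, hv, one_mul]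
  calc ‖⟪x, A x⟫_ℂ‖ ≤ ‖x‖ * ‖A x‖ := norm_inner_le_norm _ _
    _ ≤ ‖x‖ * (‖A‖ * ‖x‖) := by gcongr; exact A.le_opNorm x
    _ = ‖A‖ * ‖x‖ ^ 2 := by ring

lemma inner_B (A : H →L[ℂ] H) (lam v : ℂ) (x : H) :
    v * ⟪x, (A - lam • (1 : H →L[ℂ] H)) x⟫_ℂ = v * ⟪x, A x⟫_ℂ - (v * lam) * ((‖x‖ ^ 2 : ℝ) : ℂ) := by
  change v * ⟪x, A x - lam • x⟫_ℂ = _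
  rw [inner_sub_right, inner_smul_right, inner_self_eq_norm_sq_to_K]
  push_cast
  simp only [Complex.coe_algebraMap]
  ring

lemma keyB (A : H →L[ℂ] H) (lam v : ℂ) (hv : ‖v‖ = 1) (σ : ℝ) (k r : ℕ) (hrk : r < k)
    (hk : (k : Cardinal) ≤ Module.rank ℂ H) (M : Submodule ℂ H) [FiniteDimensional ℂ M]
    (hMk : Module.finrank ℂ M < k)
    (hM : ∀ m ∈ M, ∀ x ∈ Mᗮ, ⟪m, (A - lam • (1 : H →L[ℂ] H)) x⟫_ℂ = 0 ∧
      ⟪x, (A - lam • (1 : H →L[ℂ] H)) m⟫_ℂ = 0)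
    (hlex : ∀ x ∈ Mᗮ, x ≠ 0 → ¬ lexL σ (v * ⟪x, (A - lam • (1 : H →L[ℂ] H)) x⟫_ℂ))
    (hlam : -‖A‖ < (v * lam).re) :
    ∃ N : Submodule ℂ H, ∃ _ : FiniteDimensional ℂ N, Module.finrank ℂ N = r ∧
      ∀ c : ℂ, v * c = -(2 * (‖A‖ : ℂ)) →
        ¬ IsoH (A - lam • (1 : H →L[ℂ] H) + c • N.starProjection) (k - r) := by
  set B := A - lam • (1 : H →L[ℂ] H) with hBdef
  have hN : ∃ N : Submodule ℂ H, FiniteDimensional ℂ N ∧ Module.finrank ℂ N = r ∧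
      Module.finrank ℂ (Nᗮ ⊓ M : Submodule ℂ H) < k - r ∧ (M ≤ N ∨ N ≤ M) := by
    rcases le_total (Module.finrank ℂ M) r with h | h
    · obtain ⟨N, h1, h2, h3⟩ := exists_superspace M r h
        (le_trans (by exact_mod_cast hrk.le) hk)
      refine ⟨N, h2, h3, ?_, Or.inl h1⟩
      have : (Nᗮ ⊓ M : Submodule ℂ H) = ⊥ := by
        rw [eq_bot_iff]
        intro x hx
        have h5 := (Submodule.mem_orthogonal _ _).1 hx.1 x (h1 hx.2)
        simpa using h5
      rw [this, finrank_bot]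
      omega
    · obtain ⟨N, h1, h2, h3⟩ := exists_sub M r (by
        rw [← Module.finrank_eq_rank]; exact_mod_cast h)
      refine ⟨N, h2, h3, ?_, Or.inr h1⟩
      have := Submodule.finrank_add_inf_finrank_orthogonal h1
      omega
  obtain ⟨N, hNfd, hNr, hL, hNM⟩ := hN
  refine ⟨N, hNfd, hNr, ?_⟩
  rintro c hc ⟨V, hVfd, hVk, hV⟩
  set L : Submodule ℂ H := Nᗮ ⊓ M with hLdef
  have hLfd : FiniteDimensional ℂ L := Submodule.finiteDimensional_of_le (inf_le_right (b := M))
  obtain ⟨x, hxV, hx0, hxL⟩ : ∃ x ∈ V, x ≠ 0 ∧ x ∈ Lᗮ := by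
    let f : V →ₗ[ℂ] L := (L.orthogonalProjectionOnto : H →ₗ[ℂ] L) ∘ₗ V.subtype
    have hker : LinearMap.ker f ≠ ⊥ := LinearMap.ker_ne_bot_of_finrank_lt (by rw [hVk]; exact hL)
    obtain ⟨x, hx, hx0⟩ := Submodule.exists_mem_ne_zero_of_ne_bot hker
    refine ⟨x, x.2, by simpa using hx0, ?_⟩
    have h1 : L.orthogonalProjectionOnto (x : H) = 0 := hx
    rw [← Submodule.starProjection_apply_eq_zero_iff]
    change ((L.orthogonalProjectionOnto (x : H) : L) : H) = 0
    rw [h1]; rfl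
  have hform := hV x hxV x hxV
  change ⟪x, B x + c • N.starProjection x⟫_ℂ = 0 at hform
  obtain ⟨m, hm⟩ : ∃ m, m = M.starProjection x := ⟨_, rfl⟩
  obtain ⟨m', hm'⟩ : ∃ m', m' = x - m := ⟨_, rfl⟩
  have hmM : m ∈ M := by rw [hm]; exact M.starProjection_apply_mem x
  have hm'M : m' ∈ Mᗮ := by rw [hm', hm]; exact M.sub_starProjection_mem_orthogonal x
  have hx : x = m + m' := by rw [hm']; abel
  have hmN : N.starProjection m = m := by
    rcases hNM with h | h
    · exact Submodule.starProjection_eq_self_iff.2 (h hmM)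
    · have hd : m - N.starProjection m ∈ L :=
        ⟨N.sub_starProjection_mem_orthogonal m, M.sub_mem hmM (h (N.starProjection_apply_mem m))⟩
      have e1 : ⟪m - N.starProjection m, m⟫_ℂ = 0 := by
        have e2 : ⟪m - N.starProjection m, x⟫_ℂ = 0 := (Submodule.mem_orthogonal _ _).1 hxL _ hd
        have e3 : ⟪m - N.starProjection m, m'⟫_ℂ = 0 := (Submodule.mem_orthogonal _ _).1 hm'M _ hd.2
        rw [hx, inner_add_right, e3, add_zero] at e2
        exact e2
      have e4 : ⟪m - N.starProjection m, N.starProjection m⟫_ℂ = 0 :=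
        (Submodule.mem_orthogonal' _ _).1 hd.1 _ (N.starProjection_apply_mem m)
      have e5 : ⟪m - N.starProjection m, m - N.starProjection m⟫_ℂ = 0 := by
        rw [inner_sub_right, e1, e4, sub_zero]
      exact (sub_eq_zero.1 (inner_self_eq_zero.1 e5)).symm
  have hnorm : ‖m‖ ^ 2 ≤ ‖m‖ * ‖N.starProjection x‖ := by
    have e1 : ⟪m, N.starProjection x⟫_ℂ = ((‖m‖ : ℂ)) ^ 2 := by
      rw [← Submodule.inner_starProjection_left_eq_right, hmN, hx, inner_add_right,
        (Submodule.mem_orthogonal _ _).1 hm'M _ hmM, add_zero, inner_self_eq_norm_sq_to_K]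
      rfl
    have e2 := norm_inner_le_norm (𝕜 := ℂ) m (N.starProjection x)
    rw [e1] at e2
    simpa using e2
  have hPN : ⟪x, N.starProjection x⟫_ℂ = ((‖N.starProjection x‖ ^ 2 : ℝ) : ℂ) := by
    have e1 : N.starProjection (N.starProjection x) = N.starProjection x :=
      Submodule.starProjection_eq_self_iff.2 (N.starProjection_apply_mem x)
    rw [← e1, ← Submodule.inner_starProjection_left_eq_right, e1, inner_self_eq_norm_sq_to_K]
    push_cast
    rfl
  have hsplit : v * ⟪m, B m⟫_ℂ + v * ⟪m', B m'⟫_ℂ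
      - ((2 * ‖A‖ * ‖N.starProjection x‖ ^ 2 : ℝ) : ℂ) = 0 := by
    obtain ⟨c1, c2⟩ := hM m hmM m' hm'M
    rw [inner_add_right, inner_smul_right, hPN] at hform
    have e1 : ⟪x, B x⟫_ℂ = ⟪m, B m⟫_ℂ + ⟪m', B m'⟫_ℂ := by
      rw [hx, map_add, inner_add_left, inner_add_right, inner_add_right, c1, c2]; ring
    rw [e1] at hform
    push_cast at hform ⊢
    linear_combination v * hform - (‖N.starProjection x‖ : ℂ) ^ 2 * hc
  generalize ‖N.starProjection x‖ = q at *
  have hA0 : 0 ≤ ‖A‖ := norm_nonneg A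
  by_cases hm0 : m = 0
  · have hxm' : x = m' := by rw [hx, hm0, zero_add]
    have hm'0 : m' ≠ 0 := hxm' ▸ hx0
    refine hlex m' hm'M hm'0 ?_
    rw [hm0, map_zero, inner_zero_left, mul_zero, zero_add, sub_eq_zero] at hsplit
    rw [hsplit]
    have hq : 0 ≤ 2 * ‖A‖ * q ^ 2 := by positivity
    rcases hq.lt_or_eq with h | h
    · left; rw [Complex.ofReal_re]; exact h
    · right; rw [← h]; simp
  · have hmp : 0 < ‖m‖ := norm_pos_iff.2 hm0
    have hq : ‖m‖ ≤ q := by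
      by_contra! hh
      nlinarith
    have hre' : (v * ⟪m', B m'⟫_ℂ).re ≤ 0 := by
      by_cases h0 : m' = 0
      · rw [h0]; simp
      · by_contra! hh
        exact hlex m' hm'M h0 (Or.inl hh)
    have hre : (v * ⟪m, B m⟫_ℂ).re < 2 * ‖A‖ * ‖m‖ ^ 2 := by
      rw [hBdef, inner_B, Complex.sub_re, Complex.re_mul_ofReal]
      have e1 := (Complex.re_le_norm _).trans (inner_bound A v hv m)
      have e2 : 0 < ‖m‖ ^ 2 := by positivity
      nlinarith
    have e3 := congrArg Complex.re hsplit
    rw [Complex.sub_re, Complex.add_re, Complex.ofReal_re, Complex.zero_re] at e3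
    have e4 : 2 * ‖A‖ * ‖m‖ ^ 2 ≤ 2 * ‖A‖ * q ^ 2 := by gcongr
    linarith

lemma exists_angle (z : ℂ) (hz : ‖z‖ = 1) :
    ∃ ξ ∈ Set.Ico (0 : ℝ) (2 * Real.pi), Complex.exp (ξ * Complex.I) = z := by
  have h := Complex.norm_mul_exp_arg_mul_I z
  rw [hz, Complex.ofReal_one, one_mul] at h
  rcases le_or_gt 0 z.arg with h0 | h0
  · refine ⟨z.arg, ⟨h0, ?_⟩, h⟩
    linarith [Complex.arg_le_pi z, Real.pi_pos]
  · refine ⟨z.arg + 2 * Real.pi, ⟨?_, ?_⟩, ?_⟩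
    · linarith [Complex.neg_pi_lt_arg z, Real.pi_pos]
    · linarith
    · push_cast
      rw [add_mul, Complex.exp_add, h, Complex.exp_two_pi_mul_I, mul_one]

/-- For a normal operator `A`, `1 ≤ r < k ≤ dim ℋ`, and any collection `𝒮` of
operators of rank at most `r` containing
`𝒮₀ = {2e^{iξ}‖A‖P : P a rank-r orthogonal projection, ξ ∈ [0,2π)}`,
`Λ_k(A)` is the intersection of the sets `Λ_{k-r}(A+F)` for `F ∈ 𝒮`. -/
theorem rankKRange_eq_iInter_perturbed_normal
    (A : H →L[ℂ] H)
    (hA : ContinuousLinearMap.adjoint A ∘L A = A ∘L ContinuousLinearMap.adjoint A)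
    (r k : ℕ) (hr : 1 ≤ r) (hrk : r < k) (hk : (k : Cardinal) ≤ Module.rank ℂ H)
    (S : Set (H →L[ℂ] H))
    (hSrank : ∀ F ∈ S, opRank F ≤ r)
    (hS0 : ∀ ξ ∈ Set.Ico (0 : ℝ) (2 * Real.pi), ∀ P : H →L[ℂ] H,
      IsOrthProj P → opRank P = r →
      ((2 * Complex.exp (ξ * Complex.I) * (‖A‖ : ℂ)) • P) ∈ S) :
    rankKRange k A = ⋂ F ∈ S, rankKRange (k - r) (A + F) := by
  have hsub : ∀ F : H →L[ℂ] H, ∀ lam : ℂ, A + F - lam • (1 : H →L[ℂ] H) = A - lam • (1 : H →L[ℂ] H) + F := by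
    intro F lam; abel
  apply Set.Subset.antisymm
  · intro lam hlam
    rw [Set.mem_iInter₂]
    intro F hF
    rw [mem_rankK_iff] at hlam ⊢
    rw [hsub]
    exact partA k r _ F (hSrank F hF) hlam
  · intro lam hlam
    rw [Set.mem_iInter₂] at hlam
    by_contra hcon
    rw [mem_rankK_iff] at hcon
    have hmain : ∃ v : ℂ, ‖v‖ = 1 ∧ ∃ σ : ℝ, ∃ M : Submodule ℂ H, FiniteDimensional ℂ M ∧
        Module.finrank ℂ M < k ∧
        (∀ m ∈ M, ∀ x ∈ Mᗮ, ⟪m, (A - lam • (1 : H →L[ℂ] H)) x⟫_ℂ = 0 ∧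
          ⟪x, (A - lam • (1 : H →L[ℂ] H)) m⟫_ℂ = 0) ∧
        (∀ x ∈ Mᗮ, x ≠ 0 → ¬ lexL σ (v * ⟪x, (A - lam • (1 : H →L[ℂ] H)) x⟫_ℂ)) ∧
        -‖A‖ < (v * lam).re := by
      have hA0 : 0 ≤ ‖A‖ := norm_nonneg A
      rcases lt_or_ge ‖A‖ ‖lam‖ with hlt | hge
      · have hlp : 0 < ‖lam‖ := hA0.trans_lt hlt
        have hlc : (‖lam‖ : ℂ) ≠ 0 := by exact_mod_cast hlp.ne'
        have hvl : (starRingEnd ℂ) lam / ‖lam‖ * lam = ((‖lam‖ : ℝ) : ℂ) := by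
          rw [div_mul_eq_mul_div, mul_comm, Complex.mul_conj, Complex.normSq_eq_norm_sq]
          push_cast
          field_simp
        have hv : ‖(starRingEnd ℂ) lam / ‖lam‖‖ = 1 := by
          rw [norm_div, RCLike.norm_conj, Complex.norm_real, norm_norm, div_self hlp.ne']
        refine ⟨(starRingEnd ℂ) lam / ‖lam‖, hv, 1, ⊥, inferInstance, ?_, ?_, ?_, ?_⟩
        · rw [finrank_bot]; omega
        · intro m hm x _
          rw [(Submodule.mem_bot ℂ).1 hm]; simp
        · intro x _ hx0 hl
          have hxp : 0 < ‖x‖ := norm_pos_iff.2 hx0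
          have e1 := (Complex.re_le_norm _).trans (inner_bound A _ hv x)
          have e2 : (((starRingEnd ℂ) lam / ‖lam‖) * ⟪x, (A - lam • (1 : H →L[ℂ] H)) x⟫_ℂ).re < 0 := by
            rw [inner_B, hvl, Complex.sub_re, Complex.re_mul_ofReal, Complex.ofReal_re]
            have e2 : 0 < ‖x‖ ^ 2 := by positivity
            nlinarith
          rcases hl with h | h
          · linarith
          · linarith [h.1]
        · rw [hvl, Complex.ofReal_re]; linarith
      · have hBn : Commute (star (A - lam • (1 : H →L[ℂ] H))) (A - lam • (1 : H →L[ℂ] H)) := by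
          have hAc : Commute (star A) A := hA
          rw [star_sub, star_smul, star_one]
          exact ((hAc.sub_left ((Commute.one_left A).smul_left _))).sub_right
            ((Commute.one_right _).smul_right _)
        obtain ⟨v, hv, σ, hσ, M, hfd, hMk, hM1, hM2⟩ := partD hBn k hcon
        refine ⟨v, hv, σ, M, hfd, hMk, hM1, hM2, ?_⟩
        by_contra! hre
        have hMne : Mᗮ ≠ ⊥ := by
          intro hbot
          have htop : M = ⊤ := (Submodule.orthogonal_eq_bot_iff).1 hbot
          have h4 : Module.rank ℂ M = Module.finrank ℂ M := (Module.finrank_eq_rank ℂ M).symm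
          rw [htop, rank_top] at h4
          rw [h4] at hk
          rw [htop] at hMk
          have : k ≤ Module.finrank ℂ (⊤ : Submodule ℂ H) := by exact_mod_cast hk
          omega
        obtain ⟨x, hxM, hx0⟩ := Submodule.exists_mem_ne_zero_of_ne_bot hMne
        refine hM2 x hxM hx0 ?_
        have e1 := inner_bound A v hv x
        have e2 : ‖v * lam‖ ≤ ‖A‖ := by rw [norm_mul, hv, one_mul]; exact hge
        rw [inner_B]
        have hxp : 0 < ‖x‖ ^ 2 := by have := norm_pos_iff.2 hx0; positivity
        have e3 : (v * lam).re = -‖A‖ := by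
          have := (abs_le.1 ((Complex.abs_re_le_norm (v * lam)).trans e2)).1
          linarith
        have e4 : (v * lam).im = 0 := by
          have h1 := Complex.sq_norm (v * lam)
          rw [Complex.normSq_apply, e3] at h1
          have h2 : ‖v * lam‖ ^ 2 ≤ ‖A‖ ^ 2 := by gcongr
          have h3 : (v * lam).im * (v * lam).im ≤ 0 := by nlinarith
          exact mul_self_eq_zero.1 (le_antisymm h3 (mul_self_nonneg _))
        generalize v * lam = l at *
        generalize v * ⟪x, A x⟫_ℂ = w at *
        have e5 := (abs_le.1 ((Complex.abs_re_le_norm w).trans e1)).1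
        simp only [lexL, Complex.sub_re, Complex.sub_im, Complex.re_mul_ofReal, Complex.im_mul_ofReal, e3, e4]
        rcases e5.lt_or_eq with h | h
        · left; linarith
        · right
          refine ⟨by linarith, ?_⟩
          have h1 := Complex.sq_norm w
          rw [Complex.normSq_apply, ← h] at h1
          have h2 : ‖w‖ ^ 2 ≤ (‖A‖ * ‖x‖ ^ 2) ^ 2 := by gcongr
          have h3 : w.im * w.im ≤ 0 := by nlinarith
          have h4 : w.im = 0 := mul_self_eq_zero.1 (le_antisymm h3 (mul_self_nonneg _))
          rw [h4]; simp
    obtain ⟨v, hv, σ, M, hfd, hMk, hM1, hM2, hre⟩ := hmain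
    obtain ⟨N, hNfd, hNr, hN⟩ := keyB A lam v hv σ k r hrk hk M hMk hM1 hM2 hre
    obtain ⟨ξ, hξ, hξe⟩ := exists_angle (-(starRingEnd ℂ) v) (by rw [norm_neg, RCLike.norm_conj, hv])
    have hmem := hlam _ (hS0 ξ hξ N.starProjection (isOrthProj_star N) (by rw [opRank_star, hNr]))
    rw [mem_rankK_iff, hsub] at hmem
    refine hN _ ?_ hmem
    rw [hξe]
    have h1 : v * (starRingEnd ℂ) v = 1 := by
      rw [Complex.mul_conj, Complex.normSq_eq_norm_sq, hv]; simp
    linear_combination (-2 * (‖A‖ : ℂ)) * h1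
end
end

section
/- Let ℋ be a complex Hilbert space, let A ∈ B(ℋ) be self-adjoint, and let 1 ≤ r < k ≤ dim ℋ. Let 𝒮 be any subset of F_r containing the set {±2‖A‖P : P ∈ P_r}. Then Λ_k(A) = ⋂{Λ_{k−r}(A + F) : F ∈ 𝒮}. -/
noncomputable section

open scoped InnerProductSpace
open Complex

variable {H : Type*} [NormedAddCommGroup H] [InnerProductSpace ℂ H] [CompleteSpace H]

theorem aux_sub (V : Submodule ℂ H) (n : ℕ) (h : (n : Cardinal) ≤ Module.rank ℂ V) :
    ∃ U : Submodule ℂ H, U ≤ V ∧ FiniteDimensional ℂ U ∧ Module.finrank ℂ U = n := by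
  obtain ⟨v, hv⟩ := Module.le_rank_iff.1 h
  have hv' : LinearIndependent ℂ (fun i => (v i : H)) :=
    hv.map' V.subtype (Submodule.ker_subtype V)
  refine ⟨Submodule.span ℂ (Set.range fun i => (v i : H)), ?_, ?_, ?_⟩
  · rw [Submodule.span_le]
    rintro _ ⟨i, rfl⟩
    exact (v i).2
  · exact FiniteDimensional.span_of_finite ℂ (Set.finite_range _)
  · simpa using finrank_span_eq_card hv'

theorem aux_add (U : Submodule ℂ H) [FiniteDimensional ℂ U] (x : H) (hx : x ∉ U) :
    FiniteDimensional ℂ (U ⊔ Submodule.span ℂ {x} : Submodule ℂ H) ∧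
    Module.finrank ℂ (U ⊔ Submodule.span ℂ {x} : Submodule ℂ H) = Module.finrank ℂ U + 1 := by
  have hx0 : x ≠ 0 := fun h => hx (h ▸ U.zero_mem)
  have h1 := Submodule.finrank_sup_add_finrank_inf_eq U (Submodule.span ℂ {x})
  have h2 : U ⊓ Submodule.span ℂ {x} = ⊥ := by
    rw [← disjoint_iff]
    exact (Submodule.disjoint_span_singleton' hx0).2 hx
  rw [h2, finrank_bot, finrank_span_singleton hx0] at h1
  exact ⟨inferInstance, by omega⟩

theorem aux_sup (E : Submodule ℂ H) (hE : FiniteDimensional ℂ E) (n : ℕ)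
    (h : Module.finrank ℂ E ≤ n) (hn : (n : Cardinal) ≤ Module.rank ℂ H) :
    ∃ U : Submodule ℂ H, E ≤ U ∧ FiniteDimensional ℂ U ∧ Module.finrank ℂ U = n := by
  induction n, h using Nat.le_induction with
  | base => exact ⟨E, le_rfl, hE, rfl⟩
  | succ n h ih =>
    obtain ⟨U, hEU, hU, hUn⟩ := ih (le_trans (by exact_mod_cast Nat.le_succ n) hn)
    have : ∃ x, x ∉ U := by
      by_contra hc
      push Not at hc
      have : U = ⊤ := by ext x; simp [hc x]
      subst this
      have h3 : Module.rank ℂ H = n := by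
        rw [← rank_top, ← Module.finrank_eq_rank, hUn]
      rw [h3] at hn
      have : n + 1 ≤ n := by exact_mod_cast hn
      omega
    obtain ⟨x, hx⟩ := this
    obtain ⟨h1, h2⟩ := aux_add U x hx
    exact ⟨_, hEU.trans le_sup_left, h1, by rw [h2, hUn]⟩

theorem aux_proj (U : Submodule ℂ H) [FiniteDimensional ℂ U] (n : ℕ)
    (hn : Module.finrank ℂ U = n) :
    IsOrthProj U.starProjection ∧ opRank U.starProjection = n := by
  refine ⟨⟨isSelfAdjoint_starProjection U, U.isIdempotentElem_starProjection⟩, ?_⟩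
  unfold opRank
  have : LinearMap.range (U.starProjection : H →ₗ[ℂ] H) = U := U.range_starProjection
  rw [this, ← Module.finrank_eq_rank, hn]

theorem aux_mem (k : ℕ) (hk : 1 ≤ k) (A : H →L[ℂ] H) (l : ℂ) :
    l ∈ rankKRange k A ↔ ∃ V : Submodule ℂ H, FiniteDimensional ℂ V ∧ Module.finrank ℂ V = k ∧
      ∀ x ∈ V, ⟪x, A x⟫_ℂ = l * ⟪x, x⟫_ℂ := by
  constructor
  · rintro ⟨P, ⟨hs, hi⟩, hr, hP⟩
    have hfr : Module.finrank ℂ (LinearMap.range (P : H →ₗ[ℂ] H)) = k :=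
      Module.finrank_eq_of_rank_eq hr
    refine ⟨LinearMap.range (P : H →ₗ[ℂ] H), Module.finite_of_finrank_pos (by omega), hfr, ?_⟩
    rintro _ ⟨y, rfl⟩
    have h1 := congrArg (fun T : H →L[ℂ] H => ⟪y, T y⟫_ℂ) hP
    have hsym : ∀ a b, ⟪P a, b⟫_ℂ = ⟪a, P b⟫_ℂ := hs.isSymmetric
    have h2 : P (P y) = P y := congrArg (fun T : H →L[ℂ] H => T y) hi
    simp only [ContinuousLinearMap.comp_apply, smul_apply,
      inner_smul_right] at h1
    simp only [ContinuousLinearMap.coe_coe]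
    rw [hsym, hsym, h2, h1]
  · rintro ⟨V, hfd, hV, h⟩
    obtain ⟨h1, h2⟩ := aux_proj V k hV
    refine ⟨_, h1, h2, ?_⟩
    set P := V.starProjection with hPdef
    have hsym : ∀ a b, ⟪P a, b⟫_ℂ = ⟪a, P b⟫_ℂ := h1.1.isSymmetric
    have hi : ∀ y, P (P y) = P y := fun y => congrArg (fun T : H →L[ℂ] H => T y) h1.2
    rw [← sub_eq_zero]
    have h3 : ((P ∘L A ∘L P - l • P : H →L[ℂ] H) : H →ₗ[ℂ] H) = 0 := by
      rw [← inner_map_self_eq_zero]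
      intro x
      rw [← inner_conj_symm, map_eq_zero]
      have h4 := h (P x) (V.starProjection_apply_mem x)
      simp only [ContinuousLinearMap.coe_coe, sub_apply,
        ContinuousLinearMap.comp_apply, smul_apply, inner_sub_right,
        inner_smul_right]
      rw [← hsym, h4, hsym, hi, sub_self]
    exact ContinuousLinearMap.coe_injective h3

theorem aux_cs (B : H →L[ℂ] H) (hB : ∀ x y, ⟪B x, y⟫_ℂ = ⟪x, B y⟫_ℂ) (V : Submodule ℂ H)
    (hV : ∀ x ∈ V, 0 ≤ (⟪x, B x⟫_ℂ).re) (z : H) (hz : z ∈ V) (hz0 : (⟪z, B z⟫_ℂ).re = 0)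
    (v : H) (hv : v ∈ V) : ⟪z, B v⟫_ℂ = 0 := by
  set a := ⟪z, B v⟫_ℂ with ha
  set b := (⟪v, B v⟫_ℂ).re with hb
  have hb0 : 0 ≤ b := hV v hv
  have hva : ⟪v, B z⟫_ℂ = (starRingEnd ℂ) a := by
    rw [ha, inner_conj_symm, hB]
  have key : ∀ s : ℝ, 0 ≤ -2 * s * normSq a + s ^ 2 * normSq a * b := by
    intro s
    have h1 := hV (z + (-(s : ℂ) * (starRingEnd ℂ) a) • v)
      (V.add_mem hz (V.smul_mem _ hv))
    simp only [map_add, map_smul, inner_add_left, inner_add_right, inner_smul_left,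
      inner_smul_right, hva, ← ha] at h1
    have hbi : ⟪v, B v⟫_ℂ = (b : ℂ) := by
      have : (starRingEnd ℂ) ⟪v, B v⟫_ℂ = ⟪v, B v⟫_ℂ := by rw [inner_conj_symm, hB]
      exact (Complex.conj_eq_iff_re.1 this).symm
    rw [hbi] at h1
    have e : normSq a = a.re * a.re + a.im * a.im := normSq_apply a
    simp [hz0] at h1
    rw [e]
    nlinarith [h1]
  have h1 := key (1 / (b + 1))
  have h2 : -2 * (1 / (b + 1)) * normSq a + (1 / (b + 1)) ^ 2 * normSq a * b
      = - normSq a * (b + 2) / (b + 1) ^ 2 := by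
    field_simp
    ring
  rw [h2] at h1
  have h3 : 0 ≤ normSq a := normSq_nonneg a
  by_contra hne
  have h4 : 0 < normSq a := normSq_pos.2 hne
  have : - normSq a * (b + 2) / (b + 1) ^ 2 < 0 := by
    apply div_neg_of_neg_of_pos
    · nlinarith
    · positivity
  linarith

theorem aux_ext (B : H →L[ℂ] H) (hB : ∀ x y, ⟪B x, y⟫_ℂ = ⟪x, B y⟫_ℂ) (V Z : Submodule ℂ H)
    [FiniteDimensional ℂ V] [FiniteDimensional ℂ Z]
    (hV : ∀ x ∈ V, 0 ≤ (⟪x, B x⟫_ℂ).re) (hZ : ∀ x ∈ Z, ⟪x, B x⟫_ℂ = 0)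
    (hlt : Module.finrank ℂ Z < Module.finrank ℂ V) :
    ∃ p ∈ V, p ∉ Z ∧ ∀ z ∈ Z, ⟪z, B p⟫_ℂ = 0 := by
  have h1 := Submodule.finrank_add_inf_finrank_orthogonal (inf_le_left : Z ⊓ V ≤ Z)
  have h2 := Submodule.finrank_add_inf_finrank_orthogonal (inf_le_right : Z ⊓ V ≤ V)
  set C := (Z ⊓ V)ᗮ ⊓ Z with hC
  set D := (Z ⊓ V)ᗮ ⊓ V with hD
  have hCf : FiniteDimensional ℂ C := Submodule.finiteDimensional_of_le (inf_le_right : C ≤ Z)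
  have hDf : FiniteDimensional ℂ D := Submodule.finiteDimensional_of_le (inf_le_right : D ≤ V)
  let f : D →ₗ[ℂ] C := (C.orthogonalProjectionOnto : H →ₗ[ℂ] C) ∘ₗ (B : H →ₗ[ℂ] H) ∘ₗ D.subtype
  have hker : LinearMap.ker f ≠ ⊥ := LinearMap.ker_ne_bot_of_finrank_lt (by omega)
  obtain ⟨d, hd, hd0⟩ := (Submodule.ne_bot_iff _).1 hker
  have hdV : (d : H) ∈ V := d.2.2
  refine ⟨d, hdV, ?_, ?_⟩
  · intro hdZ
    apply hd0
    have := d.2.1 d ⟨hdZ, hdV⟩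
    exact Subtype.ext (inner_self_eq_zero.1 this)
  · have hBd : B d ∈ Cᗮ := by
      rw [← C.ker_orthogonalProjectionOnto]
      exact hd
    intro z hz
    have hdec : z ∈ (Z ⊓ V) ⊔ (Z ⊓ V)ᗮ ⊓ Z := by
      rw [Submodule.sup_orthogonal_inf_of_hasOrthogonalProjection inf_le_left]
      exact hz
    obtain ⟨u, hu, c, hc, rfl⟩ := Submodule.mem_sup.1 hdec
    rw [inner_add_left, hBd c hc, add_zero]
    exact aux_cs B hB V hV u hu.2 (by rw [hZ u hu.1]; rfl) d hdV

theorem aux_phase (g : ℂ) : ∃ c : ℂ, (starRingEnd ℂ) c * c = 1 ∧ (c * g).re = 0 := by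
  by_cases hg : g = 0
  · exact ⟨1, by simp, by simp [hg]⟩
  · have hn : (‖g‖ : ℂ) ≠ 0 := by exact_mod_cast norm_ne_zero_iff.2 hg
    refine ⟨Complex.I * (starRingEnd ℂ) g / ‖g‖, ?_, ?_⟩
    · have h := Complex.conj_mul' g
      simp only [map_div₀, map_mul, conj_I, conj_conj, conj_ofReal]
      field_simp
      rw [Complex.I_sq]
      linear_combination h
    · have h := Complex.conj_mul' g
      have : Complex.I * (starRingEnd ℂ) g / ‖g‖ * g = Complex.I * (‖g‖ : ℂ) := by
        field_simp
        linear_combination h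
      rw [this]
      simp

theorem aux_step (B : H →L[ℂ] H) (hB : ∀ x y, ⟪B x, y⟫_ℂ = ⟪x, B y⟫_ℂ) (V V' Z : Submodule ℂ H)
    [FiniteDimensional ℂ V] [FiniteDimensional ℂ V'] [FiniteDimensional ℂ Z]
    (hV : ∀ x ∈ V, 0 ≤ (⟪x, B x⟫_ℂ).re) (hV' : ∀ x ∈ V', (⟪x, B x⟫_ℂ).re ≤ 0)
    (hZ : ∀ x ∈ Z, ⟪x, B x⟫_ℂ = 0)
    (hlt : Module.finrank ℂ Z < Module.finrank ℂ V)
    (hlt' : Module.finrank ℂ Z < Module.finrank ℂ V') :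
    ∃ w, w ∉ Z ∧ ⟪w, B w⟫_ℂ = 0 ∧ ∀ z ∈ Z, ⟪z, B w⟫_ℂ = 0 := by
  have hre : ∀ x, (((⟪x, B x⟫_ℂ).re : ℝ) : ℂ) = ⟪x, B x⟫_ℂ := fun x => by
    have : (starRingEnd ℂ) ⟪x, B x⟫_ℂ = ⟪x, B x⟫_ℂ := by rw [inner_conj_symm, hB]
    exact (Complex.conj_eq_iff_re.1 this)
  obtain ⟨p, hpV, hpZ, hp⟩ := aux_ext B hB V Z hV hZ hlt
  obtain ⟨n, hnV, hnZ, hn⟩ := aux_ext (-B) (fun x y => by simp [hB]) V' Z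
    (fun x hx => by simpa using hV' x hx) (fun x hx => by simpa using hZ x hx) hlt'
  have hn : ∀ z ∈ Z, ⟪z, B n⟫_ℂ = 0 := fun z hz => by simpa using hn z hz
  have ha := hV p hpV
  have hb := hV' n hnV
  set a := (⟪p, B p⟫_ℂ).re with hadef
  set b := (⟪n, B n⟫_ℂ).re with hbdef
  rcases ha.eq_or_lt with ha0 | ha0
  · exact ⟨p, hpZ, by rw [← hre, ← hadef, ← ha0]; simp, hp⟩
  rcases hb.eq_or_lt with hb0 | hb0
  · exact ⟨n, hnZ, by rw [← hre, ← hbdef, hb0]; simp, hn⟩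
  obtain ⟨c, hc1, hc2⟩ := aux_phase ⟪p, B n⟫_ℂ
  set t := Real.sqrt (a / (-b)) with ht
  have hq : 0 < a / (-b) := div_pos ha0 (by linarith)
  have ht0 : 0 < t := Real.sqrt_pos.2 hq
  have ht2 : t ^ 2 * b = - a := by
    rw [ht, Real.sq_sqrt hq.le]
    have : b ≠ 0 := hb0.ne
    field_simp
  have hnp : ⟪n, B p⟫_ℂ = (starRingEnd ℂ) ⟪p, B n⟫_ℂ := by rw [inner_conj_symm, hB]
  have hpp : ⟪p, B p⟫_ℂ = (a : ℂ) := (hre p).symm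
  have hnn : ⟪n, B n⟫_ℂ = (b : ℂ) := (hre n).symm
  refine ⟨p + ((t : ℂ) * c) • n, ?_, ?_, ?_⟩
  · intro hw
    have h1 := hn _ hw
    simp only [inner_add_left, inner_smul_left, hnn, map_mul, conj_ofReal] at h1
    have h2 : c * ⟪p, B n⟫_ℂ + ((t * b : ℝ) : ℂ) = 0 := by
      push_cast
      linear_combination c * h1 - t * b * hc1
    have h3 := congrArg Complex.re h2
    rw [Complex.add_re, hc2, Complex.ofReal_re] at h3
    have : t * b < 0 := mul_neg_of_pos_of_neg ht0 hb0
    simp at h3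
    rcases h3 with h3 | h3 <;> linarith
  · rw [← hre]
    simp only [map_add, map_smul, inner_add_left, inner_add_right, inner_smul_left,
      inner_smul_right, hnp, hpp, hnn, map_mul, conj_ofReal]
    have e : (a : ℂ) + t * c * ⟪p, B n⟫_ℂ + (t * (starRingEnd ℂ) c * (starRingEnd ℂ) ⟪p, B n⟫_ℂ
        + t * (starRingEnd ℂ) c * (t * c * b)) =
        ((a + t ^ 2 * b : ℝ) : ℂ) + t * (c * ⟪p, B n⟫_ℂ + (starRingEnd ℂ) (c * ⟪p, B n⟫_ℂ)) := by
      push_cast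
      rw [map_mul]
      linear_combination (t : ℂ) ^ 2 * b * hc1
    have e2 : c * ⟪p, B n⟫_ℂ + (starRingEnd ℂ) (c * ⟪p, B n⟫_ℂ) = 0 := by
      rw [Complex.add_conj, hc2]; simp
    rw [e2, mul_zero, add_zero, ht2] at e
    have e3 := congrArg Complex.re e
    simp only [add_neg_cancel, ofReal_zero, zero_re] at e3
    have := congrArg (fun r : ℝ => (r : ℂ)) e3
    simp only [ofReal_zero] at this
    convert this using 3
    ring
  · intro z hz
    simp [inner_add_right, inner_smul_right, hp z hz, hn z hz]

theorem aux_iso (B : H →L[ℂ] H) (hB : ∀ x y, ⟪B x, y⟫_ℂ = ⟪x, B y⟫_ℂ) (V V' : Submodule ℂ H)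
    [FiniteDimensional ℂ V] [FiniteDimensional ℂ V']
    (hV : ∀ x ∈ V, 0 ≤ (⟪x, B x⟫_ℂ).re) (hV' : ∀ x ∈ V', (⟪x, B x⟫_ℂ).re ≤ 0)
    (k : ℕ) (h : k ≤ Module.finrank ℂ V) (h' : k ≤ Module.finrank ℂ V') :
    ∃ Z : Submodule ℂ H, FiniteDimensional ℂ Z ∧ Module.finrank ℂ Z = k ∧
      ∀ x ∈ Z, ⟪x, B x⟫_ℂ = 0 := by
  induction k with
  | zero => exact ⟨⊥, inferInstance, by simp, by simp⟩
  | succ k ih =>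
    obtain ⟨Z, hZf, hZk, hZ⟩ := ih (by omega) (by omega)
    obtain ⟨w, hw, hww, hzw⟩ := aux_step B hB V V' Z hV hV' hZ (by omega) (by omega)
    obtain ⟨h1, h2⟩ := aux_add Z w hw
    refine ⟨_, h1, by rw [h2, hZk], ?_⟩
    intro x hx
    obtain ⟨z, hz, y, hy, rfl⟩ := Submodule.mem_sup.1 hx
    obtain ⟨c, rfl⟩ := Submodule.mem_span_singleton.1 hy
    have hwz : ⟪w, B z⟫_ℂ = 0 := by
      rw [← hB, ← inner_conj_symm, hzw z hz, map_zero]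
    simp [inner_add_left, inner_add_right, inner_smul_left, inner_smul_right, hwz, hww,
      hzw z hz, hZ z hz]

theorem aux_spec (B : H →L[ℂ] H) (hB : IsSelfAdjoint B) :
    ∃ E : Submodule ℂ H, (∀ x ∈ E, 0 ≤ (⟪x, B x⟫_ℂ).re) ∧ (∀ x ∈ E, B x ∈ E) ∧
      ∀ x ∈ Eᗮ, x ≠ 0 → (⟪x, B x⟫_ℂ).re < 0 := by
  have hdec : B⁺ - B⁻ = B := CFC.posPart_sub_negPart B hB
  have hmul : B⁻ * B⁺ = 0 := CFC.negPart_mul_posPart B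
  have hp : (B⁺).IsPositive := (ContinuousLinearMap.nonneg_iff_isPositive _).1 (CFC.posPart_nonneg B)
  have hn : (B⁻).IsPositive := (ContinuousLinearMap.nonneg_iff_isPositive _).1 (CFC.negPart_nonneg B)
  have hBx : ∀ x, B x = B⁺ x - B⁻ x := fun x => by
    conv_lhs => rw [← hdec]
    rfl
  have hm : ∀ x, B⁻ (B⁺ x) = 0 := fun x => congrArg (fun T : H →L[ℂ] H => T x) hmul
  refine ⟨LinearMap.ker ((B⁻ : H →L[ℂ] H) : H →ₗ[ℂ] H), ?_, ?_, ?_⟩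
  · intro x hx
    have hx : B⁻ x = 0 := hx
    rw [hBx, hx, sub_zero]
    exact hp.re_inner_nonneg_right x
  · intro x hx
    have hx : B⁻ x = 0 := hx
    rw [hBx, hx, sub_zero]
    exact hm x
  · intro x hx hx0
    have h1 : ⟪x, B⁺ x⟫_ℂ = 0 := by
      rw [← inner_conj_symm, hx (B⁺ x) (hm x), map_zero]
    rw [hBx, inner_sub_right, h1, zero_sub, neg_re, neg_lt_zero]
    refine lt_of_le_of_ne (hn.re_inner_nonneg_right x) ?_
    intro h0
    apply hx0
    have h2 : B⁻ x = 0 := by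
      have := aux_cs B⁻ hn.inner_left_eq_inner_right ⊤ (fun y _ => hn.re_inner_nonneg_right y)
        x trivial h0.symm (B⁻ x) trivial
      rw [← hn.inner_left_eq_inner_right] at this
      exact inner_self_eq_zero.1 this
    exact inner_self_eq_zero.1 (hx x h2)

theorem aux_choose (E : Submodule ℂ H) [FiniteDimensional ℂ E] (r k : ℕ) (hrk : r < k)
    (hk : (k : Cardinal) ≤ Module.rank ℂ H) (hE : Module.finrank ℂ E < k) :
    ∃ U : Submodule ℂ H, ∃ _ : FiniteDimensional ℂ U, Module.finrank ℂ U = r ∧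
      ∀ X : Submodule ℂ H, FiniteDimensional ℂ X → Module.finrank ℂ X = k - r →
        ∃ x ∈ X, x ≠ 0 ∧ ‖E.starProjection x‖ ≤ ‖U.starProjection x‖ := by
  rcases le_total (Module.finrank ℂ E) r with hm | hm
  · obtain ⟨U, hEU, hU, hUr⟩ := aux_sup E inferInstance r hm
      (le_trans (by exact_mod_cast hrk.le) hk)
    refine ⟨U, hU, hUr, fun X hX hXk => ?_⟩
    have : X ≠ ⊥ := by
      rintro rfl
      simp at hXk
      omega
    obtain ⟨x, hx, hx0⟩ := (Submodule.ne_bot_iff _).1 this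
    refine ⟨x, hx, hx0, ?_⟩
    have h1 : E.starProjection (U.starProjection x) = E.starProjection x :=
      congrArg (fun T : H →L[ℂ] H => T x) (Submodule.starProjection_comp_starProjection_of_le hEU)
    rw [← h1]
    exact E.norm_starProjection_apply_le _
  · obtain ⟨U, hUE, hU, hUr⟩ := aux_sub E r
      (by rw [← Module.finrank_eq_rank]; exact_mod_cast hm)
    refine ⟨U, hU, hUr, fun X hX hXk => ?_⟩
    let f : (X × U) →ₗ[ℂ] E := LinearMap.coprod
      ((E.orthogonalProjectionOnto : H →ₗ[ℂ] E) ∘ₗ X.subtype) (-(Submodule.inclusion hUE))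
    have hker : LinearMap.ker f ≠ ⊥ := LinearMap.ker_ne_bot_of_finrank_lt (by
      rw [Module.finrank_prod]; omega)
    obtain ⟨⟨x, u⟩, hxu, h0⟩ := (Submodule.ne_bot_iff _).1 hker
    have h1 : E.starProjection (x : H) = u := by
      have h2 := congrArg (fun e : E => (e : H)) (LinearMap.mem_ker.1 hxu)
      simp [f] at h2
      rw [Submodule.starProjection_apply]
      exact add_neg_eq_zero.1 h2
    refine ⟨x, x.2, ?_, ?_⟩
    · intro hx
      apply h0
      have hu : (u : H) = 0 := by rw [← h1, hx, map_zero]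
      ext
      · exact hx
      · exact hu
    · have h2 : U.starProjection (E.starProjection (x : H)) = U.starProjection x :=
        congrArg (fun T : H →L[ℂ] H => T x)
          (Submodule.starProjection_comp_starProjection_of_le hUE)
      rw [← h2, h1, Submodule.starProjection_eq_self_iff.2 u.2]

theorem aux_key (A : H →L[ℂ] H) (hA : IsSelfAdjoint A) (l : ℝ)
    (r k : ℕ) (hrk : r < k) (hk : (k : Cardinal) ≤ Module.rank ℂ H)
    (h : ∀ U : Submodule ℂ H, ∀ _ : FiniteDimensional ℂ U, Module.finrank ℂ U = r →
      ∃ X : Submodule ℂ H, FiniteDimensional ℂ X ∧ Module.finrank ℂ X = k - r ∧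
        ∀ x ∈ X, (⟪x, A x⟫_ℂ).re - 2 * ‖A‖ * ‖U.starProjection x‖ ^ 2 = l * ‖x‖ ^ 2) :
    ∃ V : Submodule ℂ H, FiniteDimensional ℂ V ∧ Module.finrank ℂ V = k ∧
      ∀ x ∈ V, l * ‖x‖ ^ 2 ≤ (⟪x, A x⟫_ℂ).re := by
  by_contra hno
  have hbd : ∀ x, |(⟪x, A x⟫_ℂ).re| ≤ ‖A‖ * ‖x‖ ^ 2 := fun x => by
    calc |(⟪x, A x⟫_ℂ).re| ≤ ‖⟪x, A x⟫_ℂ‖ := Complex.abs_re_le_norm _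
      _ ≤ ‖x‖ * ‖A x‖ := norm_inner_le_norm _ _
      _ ≤ ‖x‖ * (‖A‖ * ‖x‖) := by gcongr; exact A.le_opNorm x
      _ = ‖A‖ * ‖x‖ ^ 2 := by ring
  have hl : -‖A‖ < l := by
    by_contra hl
    push Not at hl
    apply hno
    obtain ⟨V, -, hV, hVk⟩ := aux_sub (⊤ : Submodule ℂ H) k (by rwa [rank_top])
    refine ⟨V, hV, hVk, fun x _ => ?_⟩
    have h1 := (abs_le.1 (hbd x)).1
    nlinarith [sq_nonneg ‖x‖]
  set B : H →L[ℂ] H := A - (l : ℂ) • (1 : H →L[ℂ] H) with hBdef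
  have hBs : IsSelfAdjoint B := by
    refine hA.sub (IsSelfAdjoint.smul ?_ (IsSelfAdjoint.one _))
    exact Complex.conj_ofReal l
  have hq : ∀ x, (⟪x, B x⟫_ℂ).re = (⟪x, A x⟫_ℂ).re - l * ‖x‖ ^ 2 := fun x => by
    have h1 : B x = A x - (l : ℂ) • x := rfl
    rw [h1, inner_sub_right, inner_smul_right, inner_self_eq_norm_sq_to_K, sub_re,
      Complex.re_ofReal_mul]
    norm_cast
  have hsym : ∀ x y, ⟪B x, y⟫_ℂ = ⟪x, B y⟫_ℂ := hBs.isSymmetric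
  obtain ⟨E, hE1, hE2, hE3⟩ := aux_spec B hBs
  have hrank : Module.rank ℂ E < k := by
    by_contra hc
    push Not at hc
    obtain ⟨V, hVE, hV, hVk⟩ := aux_sub E k hc
    exact hno ⟨V, hV, hVk, fun x hx => by
      have := hE1 x (hVE hx)
      rw [hq] at this
      linarith⟩
  have hEf : FiniteDimensional ℂ E :=
    Module.rank_lt_aleph0_iff.1 (hrank.trans (Cardinal.natCast_lt_aleph0))
  have hEk : Module.finrank ℂ E < k := by
    rw [← Module.finrank_eq_rank] at hrank
    exact_mod_cast hrank
  obtain ⟨U, hU, hUr, hUX⟩ := aux_choose E r k hrk hk hEk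
  obtain ⟨X, hX, hXk, hXq⟩ := h U hU hUr
  obtain ⟨x, hx, hx0, hle⟩ := hUX X hX hXk
  have hxq := hXq x hx
  set e := E.starProjection x with he
  have heE : e ∈ E := E.starProjection_apply_mem x
  have hyE : x - e ∈ Eᗮ := E.sub_starProjection_mem_orthogonal x
  set y := x - e with hy
  have hxe : x = y + e := by rw [hy]; abel
  have hc1 : ⟪B e, y⟫_ℂ = 0 := hyE _ (hE2 e heE)
  have hc2 : ⟪y, B e⟫_ℂ = 0 := by rw [← inner_conj_symm, hc1, map_zero]
  have hc3 : ⟪e, B y⟫_ℂ = 0 := by rw [← hsym, hc1]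
  have hsum : (⟪x, B x⟫_ℂ).re = (⟪y, B y⟫_ℂ).re + (⟪e, B e⟫_ℂ).re := by
    rw [hxe, map_add, inner_add_left, inner_add_right, inner_add_right, hc2, hc3]
    simp
  have h1 := hq x
  have h2 := hq e
  have h3 := (abs_le.1 (hbd e)).2
  have hsq : ‖e‖ ^ 2 ≤ ‖U.starProjection x‖ ^ 2 := by gcongr
  have hN := norm_nonneg A
  have h4 : (‖A‖ + l) * ‖e‖ ^ 2 ≤ (⟪y, B y⟫_ℂ).re := by nlinarith
  have h5 : y = 0 := by
    by_contra hy0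
    have := hE3 y hyE hy0
    nlinarith [sq_nonneg ‖e‖]
  rw [h5] at h4
  simp at h4
  have h6 : e = 0 := by
    by_contra he0
    have : 0 < ‖e‖ ^ 2 := by positivity
    nlinarith
  exact hx0 (by rw [hxe, h5, h6, add_zero])

theorem aux_fwd (A F : H →L[ℂ] H) (r k : ℕ) (hrk : r < k) (hF : opRank F ≤ r) (l : ℂ)
    (hl : l ∈ rankKRange k A) : l ∈ rankKRange (k - r) (A + F) := by
  rw [aux_mem k (by omega)] at hl
  rw [aux_mem (k - r) (by omega)]
  obtain ⟨V, hV, hVk, hq⟩ := hl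
  have hFf : FiniteDimensional ℂ (LinearMap.range (F : H →ₗ[ℂ] H)) :=
    Module.rank_lt_aleph0_iff.1 (lt_of_le_of_lt hF (Cardinal.natCast_lt_aleph0))
  have hFr : Module.finrank ℂ (LinearMap.range (F : H →ₗ[ℂ] H)) ≤ r := by
    unfold opRank at hF
    rw [← Module.finrank_eq_rank] at hF
    exact_mod_cast hF
  let f : V →ₗ[ℂ] H := (F : H →ₗ[ℂ] H) ∘ₗ V.subtype
  have h1 := LinearMap.finrank_range_add_finrank_ker f
  have h2 : Module.finrank ℂ (LinearMap.range f) ≤ r :=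
    (Submodule.finrank_mono (LinearMap.range_comp_le_range _ _)).trans hFr
  have h3 : Module.finrank ℂ ((LinearMap.ker f).map V.subtype) =
      Module.finrank ℂ (LinearMap.ker f) :=
    Submodule.finrank_map_subtype_eq V (LinearMap.ker f)
  obtain ⟨U, hUle, hU, hUk⟩ := aux_sub ((LinearMap.ker f).map V.subtype) (k - r) (by
    rw [← Module.finrank_eq_rank, h3]
    have : k - r ≤ Module.finrank ℂ (LinearMap.ker f) := by omega
    exact_mod_cast this)
  refine ⟨U, hU, hUk, fun x hx => ?_⟩
  obtain ⟨v, hv, rfl⟩ := hUle hx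
  have hv : F (v : H) = 0 := hv
  have := hq v v.2
  simpa [hv] using this

theorem aux_bwd (A : H →L[ℂ] H) (s : ℝ) (l : ℝ) (r k : ℕ) (hrk : r < k) (U : Submodule ℂ H)
    [FiniteDimensional ℂ U]
    (h : (l : ℂ) ∈ rankKRange (k - r) (A + (s : ℂ) • U.starProjection)) :
    ∃ X : Submodule ℂ H, FiniteDimensional ℂ X ∧ Module.finrank ℂ X = k - r ∧
        ∀ x ∈ X, (⟪x, A x⟫_ℂ).re + s * ‖U.starProjection x‖ ^ 2 = l * ‖x‖ ^ 2 := by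
  rw [aux_mem (k - r) (by omega)] at h
  obtain ⟨X, hX, hXk, hq⟩ := h
  refine ⟨X, hX, hXk, fun x hx => ?_⟩
  have h1 := congrArg Complex.re (hq x hx)
  have h2 : (⟪x, U.starProjection x⟫_ℂ).re = ‖U.starProjection x‖ ^ 2 := by
    rw [← U.inner_starProjection_left_eq_right]
    exact U.re_inner_starProjection_eq_normSq x
  have h3 : (⟪x, x⟫_ℂ).re = ‖x‖ ^ 2 := by
    rw [inner_self_eq_norm_sq_to_K]
    norm_cast
  have h4 : (A + (s : ℂ) • U.starProjection) x = A x + (s : ℂ) • U.starProjection x := rfl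
  rw [h4, inner_add_right, inner_smul_right, add_re, Complex.re_ofReal_mul,
    Complex.re_ofReal_mul, h2, h3] at h1
  exact h1

/-- For a self-adjoint operator `A`, `1 ≤ r < k ≤ dim ℋ`, and any collection `𝒮` of
operators of rank at most `r` containing `{±2‖A‖P : P a rank-r orthogonal projection}`,
`Λ_k(A)` is the intersection of the sets `Λ_{k-r}(A+F)` for `F ∈ 𝒮`. -/
theorem rankKRange_eq_iInter_perturbed_selfAdjoint
    (A : H →L[ℂ] H) (hA : IsSelfAdjoint A)
    (r k : ℕ) (hr : 1 ≤ r) (hrk : r < k) (hk : (k : Cardinal) ≤ Module.rank ℂ H)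
    (S : Set (H →L[ℂ] H))
    (hSrank : ∀ F ∈ S, opRank F ≤ r)
    (hS0 : ∀ P : H →L[ℂ] H, IsOrthProj P → opRank P = r →
      ((2 * ‖A‖ : ℝ) : ℂ) • P ∈ S ∧ (-((2 * ‖A‖ : ℝ) : ℂ)) • P ∈ S) :
    rankKRange k A = ⋂ F ∈ S, rankKRange (k - r) (A + F) := by
  apply Set.Subset.antisymm
  · intro l hl
    simp only [Set.mem_iInter]
    exact fun F hF => aux_fwd A F r k hrk (hSrank F hF) l hl
  · intro l hl
    simp only [Set.mem_iInter] at hl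
    have hsymA : ∀ x y, ⟪A x, y⟫_ℂ = ⟪x, A y⟫_ℂ := hA.isSymmetric
    have hpos : ∀ U : Submodule ℂ H, ∀ _ : FiniteDimensional ℂ U, Module.finrank ℂ U = r →
        l ∈ rankKRange (k - r) (A + ((2 * ‖A‖ : ℝ) : ℂ) • U.starProjection) ∧
        l ∈ rankKRange (k - r) (A + ((-(2 * ‖A‖) : ℝ) : ℂ) • U.starProjection) := by
      intro U hU hUr
      obtain ⟨h1, h2⟩ := aux_proj U r hUr
      obtain ⟨h3, h4⟩ := hS0 _ h1 h2
      refine ⟨hl _ h3, ?_⟩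
      rw [Complex.ofReal_neg]
      exact hl _ h4
    have hlre : ((l.re : ℝ) : ℂ) = l := by
      obtain ⟨U, -, hU, hUr⟩ := aux_sub (⊤ : Submodule ℂ H) r
        (by rw [rank_top]; exact le_trans (by exact_mod_cast hrk.le) hk)
      have h1 := (hpos U hU hUr).1
      rw [aux_mem (k - r) (by omega)] at h1
      obtain ⟨X, hX, hXk, hq⟩ := h1
      have hXb : X ≠ ⊥ := by
        rintro rfl
        simp at hXk
        omega
      obtain ⟨x, hx, hx0⟩ := (Submodule.ne_bot_iff _).1 hXb
      have h2 := hq x hx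
      have hTs : IsSelfAdjoint (A + ((2 * ‖A‖ : ℝ) : ℂ) • U.starProjection) :=
        hA.add (IsSelfAdjoint.smul (Complex.conj_ofReal _) (isSelfAdjoint_starProjection U))
      have h3 : (starRingEnd ℂ) ⟪x, (A + ((2 * ‖A‖ : ℝ) : ℂ) • U.starProjection) x⟫_ℂ =
          ⟪x, (A + ((2 * ‖A‖ : ℝ) : ℂ) • U.starProjection) x⟫_ℂ := by
        rw [inner_conj_symm]
        exact hTs.isSymmetric x x
      rw [h2, map_mul, inner_conj_symm] at h3
      exact Complex.conj_eq_iff_re.1 (mul_right_cancel₀ (inner_self_ne_zero.2 hx0) h3)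
    obtain ⟨t, rfl⟩ : ∃ t : ℝ, (t : ℂ) = l := ⟨_, hlre⟩
    obtain ⟨V, hV, hVk, hVq⟩ := aux_key A hA t r k hrk hk (fun U hU hUr => by
      obtain ⟨X, hX, hXk, hq⟩ := aux_bwd A _ t r k hrk U (hpos U hU hUr).2
      exact ⟨X, hX, hXk, fun x hx => by rw [← hq x hx]; ring⟩)
    obtain ⟨V', hV', hVk', hVq'⟩ := aux_key (-A) hA.neg (-t) r k hrk hk (fun U hU hUr => by
      obtain ⟨X, hX, hXk, hq⟩ := aux_bwd A _ t r k hrk U (hpos U hU hUr).1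
      refine ⟨X, hX, hXk, fun x hx => ?_⟩
      have h1 := hq x hx
      rw [norm_neg, ContinuousLinearMap.neg_apply, inner_neg_right, neg_re]
      linarith)
    have hinner : ∀ x : H, ⟪x, x⟫_ℂ = ((‖x‖ ^ 2 : ℝ) : ℂ) := fun x => by
      rw [inner_self_eq_norm_sq_to_K]
      norm_cast
    have hBx : ∀ x, ⟪x, (A - (t : ℂ) • (1 : H →L[ℂ] H)) x⟫_ℂ =
        ⟪x, A x⟫_ℂ - (t : ℂ) * ⟪x, x⟫_ℂ := fun x => by
      have h1 : (A - (t : ℂ) • (1 : H →L[ℂ] H)) x = A x - (t : ℂ) • x := rfl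
      rw [h1, inner_sub_right, inner_smul_right]
    have hBs : IsSelfAdjoint (A - (t : ℂ) • (1 : H →L[ℂ] H)) :=
      hA.sub (IsSelfAdjoint.smul (Complex.conj_ofReal t) (IsSelfAdjoint.one _))
    obtain ⟨Z, hZ, hZk, hZq⟩ := aux_iso (A - (t : ℂ) • (1 : H →L[ℂ] H)) hBs.isSymmetric V V'
      (fun x hx => by
        have := hVq x hx
        rw [hBx, hinner, sub_re, ← ofReal_mul, ofReal_re]
        linarith)
      (fun x hx => by
        have := hVq' x hx
        rw [ContinuousLinearMap.neg_apply, inner_neg_right, neg_re] at this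
        rw [hBx, hinner, sub_re, ← ofReal_mul, ofReal_re]
        linarith) k hVk.ge hVk'.ge
    rw [aux_mem k (by omega)]
    refine ⟨Z, hZ, hZk, fun x hx => ?_⟩
    have := hZq x hx
    rw [hBx] at this
    exact sub_eq_zero.1 this
end
end
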